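/- arXiv:2407.08438 — 3 statements merged into one kernel-verified Lean document; each statement's English description precedes it below -/
import Mathlib

section
/- Let K be a number field, let k ≥ 2 be an integer, and let A : 𝓞_K → 𝓞_K be a ℤ-linear bijection. Then A(V_{K,k}) = V_{K,k} if and only if there exist a field automorphism τ of K and a unit ε ∈ 𝓞_K^× such that A(x) = ε·τ(x) for all x ∈ 𝓞_K. (Note that any field automorphism τ of K maps 𝓞_K onto 𝓞_K.) -/
open NumberField

/-- The set of `k`-free integers of a number field `K`: elements of the ring of
integers not lying in `𝔭^k` for any nonzero prime ideal `𝔭`. -/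
def kfreeSet (K : Type*) [Field K] [NumberField K] (k : ℕ) : Set (𝓞 K) :=
  {x | ∀ P : Ideal (𝓞 K), P.IsPrime → P ≠ ⊥ → x ∉ P ^ k}

theorem kf_exists_prime {K : Type*} [Field K] [NumberField K] (P : Ideal (𝓞 K)) (hP : P.IsPrime)
    (h0 : P ≠ ⊥) : ∃ q : ℕ, q.Prime ∧ (q : 𝓞 K) ∈ P := by
  have h1 : Ideal.absNorm P ≠ 0 := by
    rw [Ne, Ideal.absNorm_eq_zero_iff]; exact h0
  have h2 := Ideal.absNorm_mem P
  by_contra hcon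
  push Not at hcon
  have : ∀ n : ℕ, n ≠ 0 → (n : 𝓞 K) ∉ P := by
    intro n
    induction n using Nat.recOnMul with
    | zero => simp
    | one => intro _ h; exact hP.ne_top ((Ideal.eq_top_iff_one P).2 (by simpa using h))
    | prime p hp => intro _; exact hcon p hp
    | mul a b ha hb =>
      intro hab h
      rw [Nat.cast_mul] at h
      rcases hP.mem_or_mem h with h | h
      · exact ha (by rintro rfl; simp at hab) h
      · exact hb (by rintro rfl; simp at hab) h
  exact this _ h1 h2

theorem kf_dvd_of_mem {K : Type*} [Field K] [NumberField K] (P : Ideal (𝓞 K)) (hP : P.IsPrime)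
    (q : ℕ) (hq : q.Prime) (hqP : (q : 𝓞 K) ∈ P) (m : ℤ) (hm : (m : 𝓞 K) ∈ P) : (q : ℤ) ∣ m := by
  by_contra h
  have hc : IsCoprime (q : ℤ) m := by
    rw [Int.isCoprime_iff_gcd_eq_one]
    have := (Nat.Prime.coprime_iff_not_dvd hq (n := m.natAbs)).2 (by
      rwa [← Int.natCast_dvd])
    simpa [Int.gcd] using this
  obtain ⟨u, v, huv⟩ := hc
  apply hP.ne_top
  rw [Ideal.eq_top_iff_one]
  have : (1 : 𝓞 K) = (u : 𝓞 K) * q + v * m := by exact_mod_cast huv.symm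
  rw [this]
  exact P.add_mem (P.mul_mem_left _ hqP) (P.mul_mem_left _ hm)

theorem kf_norm_ge {K : Type*} [Field K] [NumberField K] (P : Ideal (𝓞 K)) (hP : P.IsPrime)
    (q : ℕ) (hq : q.Prime) (hqP : (q : 𝓞 K) ∈ P) (j : ℕ) (z : 𝓞 K) (hz : z ∈ P ^ j)
    (hz0 : z ≠ 0) : (q : ℤ) ^ j ≤ |Algebra.norm ℤ z| := by
  have h0 : P ≠ ⊥ := by
    rintro rfl
    simp only [Ideal.mem_bot, Nat.cast_eq_zero] at hqP
    exact hq.ne_zero hqP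
  have h1 : Ideal.absNorm P ≠ 0 := by
    rw [Ne, Ideal.absNorm_eq_zero_iff]; exact h0
  have h2 : (q : ℤ) ∣ (Ideal.absNorm P : ℤ) :=
    kf_dvd_of_mem P hP q hq hqP _ (by exact_mod_cast Ideal.absNorm_mem P)
  have h3 : (q : ℤ) ≤ Ideal.absNorm P := Int.le_of_dvd (by positivity) h2
  have h4 := Ideal.absNorm_dvd_norm_of_mem hz
  rw [map_pow] at h4
  have h5 : Algebra.norm ℤ z ≠ 0 := by
    rwa [Ne, Algebra.norm_eq_zero_iff]
  have h6 := Int.le_of_dvd (abs_pos.2 h5) ((dvd_abs _ _).2 h4)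
  push_cast at h6
  exact le_trans (pow_le_pow_left₀ (by positivity) h3 j) h6

theorem kf_primes_over {K : Type*} [Field K] [NumberField K] (q : ℕ) :
    ∃ S : Finset (Ideal (𝓞 K)), S.card ≤ Module.finrank ℤ (𝓞 K) ∧
      (q.Prime → ∀ P ∈ S, P.IsPrime ∧ (q : 𝓞 K) ∈ P) ∧
      (q.Prime → ∀ P : Ideal (𝓞 K), P.IsPrime → (q : 𝓞 K) ∈ P → P ∈ S) := by
  by_cases hq : q.Prime
  swap
  · exact ⟨∅, by simp, fun h => absurd h hq, fun h => absurd h hq⟩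
  have : Fact q.Prime := ⟨hq⟩
  have hb : (Ideal.span {(q : ℤ)}) ≠ ⊥ := by
    simp [hq.ne_zero]
  have : (Ideal.span {(q : ℤ)}).IsMaximal := Int.ideal_span_isMaximal_of_prime q
  refine ⟨IsDedekindDomain.primesOverFinset (Ideal.span {(q : ℤ)}) (𝓞 K), ?_, ?_, ?_⟩
  · rw [RingOfIntegers.rank]
    exact Ideal.card_primesOverFinset_le_finrank (𝓞 K) ℚ K hb
  · intro _ P hPS
    rw [IsDedekindDomain.mem_primesOverFinset_iff hb] at hPS
    refine ⟨hPS.1, ?_⟩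
    have h := hPS.2.over
    have : (q : ℤ) ∈ Ideal.span {(q : ℤ)} := Ideal.mem_span_singleton_self _
    rw [h, Ideal.mem_under] at this
    simpa using this
  · intro _ P hP hqP
    rw [IsDedekindDomain.mem_primesOverFinset_iff hb]
    refine ⟨hP, ⟨?_⟩⟩
    ext m
    rw [Ideal.mem_under, Ideal.mem_span_singleton]
    constructor
    · rintro ⟨c, rfl⟩
      simpa using P.mul_mem_right _ hqP
    · intro hm
      exact kf_dvd_of_mem P hP q hq hqP m (by simpa using hm)

/-- Packing bound. -/
theorem kf_pack {K : Type*} [Field K] [NumberField K] {ι : Type*} [Fintype ι] [DecidableEq ι]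
    (w : Module.Basis ι ℤ (𝓞 K)) (C : ℕ)
    (hC : ∀ (z : 𝓞 K) (s : ℕ), (∀ i, |w.repr z i| ≤ s) → 
      |Algebra.norm ℤ z| ≤ C * (s : ℤ) ^ Fintype.card ι)
    (hC1 : 1 ≤ C) (hn : 1 ≤ Fintype.card ι)
    (I : Set (𝓞 K)) (q : ℕ) (hq : C < q)
    (hI : ∀ x ∈ I, ∀ y ∈ I, x ≠ y → (q : ℤ) ^ 2 ≤ |Algebra.norm ℤ (x - y)|)
    (X : ℕ) (hX : 1 ≤ X) (S : Finset (ι → ℕ)) 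
    (hS : ∀ v ∈ S, (∀ i, v i < X) ∧ ∑ i, (v i : ℤ) • w i ∈ I) :
    (S.card : ℝ) ≤ 4 ^ Fintype.card ι * C * X ^ Fintype.card ι * ((q : ℝ) ^ 2)⁻¹ + 1 := by
  set n := Fintype.card ι with hn'
  -- choose s
  obtain ⟨s, hs1, hs2, hs3⟩ : ∃ s : ℕ, 1 ≤ s ∧ C * s ^ n < q ^ 2 ∧ q ^ 2 ≤ C * (s + 1) ^ n := by
    have hex : ∃ s : ℕ, q ^ 2 ≤ C * (s + 1) ^ n := by
      refine ⟨q ^ 2, ?_⟩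
      calc q ^ 2 ≤ (q ^ 2 + 1) := by omega
        _ ≤ (q ^ 2 + 1) ^ n := Nat.le_self_pow (by omega) _
        _ ≤ C * (q ^ 2 + 1) ^ n := Nat.le_mul_of_pos_left _ (by omega)
    classical
    have h1 := Nat.find_spec hex
    have h0 : C < q ^ 2 := lt_of_lt_of_le hq (Nat.le_self_pow (by omega) _)
    have hpos : 1 ≤ Nat.find hex := by
      rw [Nat.one_le_iff_ne_zero]
      intro h
      rw [h] at h1
      simp at h1
      omega
    refine ⟨Nat.find hex, hpos, ?_, h1⟩
    have h2 := Nat.find_min hex (m := Nat.find hex - 1) (by omega)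
    rw [Nat.sub_add_cancel hpos] at h2
    omega
  -- injection
  have hinj : S.card ≤ (X / s + 1) ^ n ∧ (X < s → S.card ≤ 1) := by
    have key : ∀ u ∈ S, ∀ v ∈ S, (∀ i, |(u i : ℤ) - v i| ≤ s) → u = v := by
      intro u hu v hv huv
      by_contra hne
      have hne' : ∑ i, (u i : ℤ) • w i ≠ ∑ i, (v i : ℤ) • w i := by
        intro h
        apply hne
        funext i
        have := congrArg (fun z => w.repr z i) h
        simp only [Module.Basis.repr_sum_self] at this
        exact_mod_cast this
      have h1 := hI _ (hS u hu).2 _ (hS v hv).2 hne'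
      have h2 := hC (∑ i, (u i : ℤ) • w i - ∑ i, (v i : ℤ) • w i) s (by
        intro i
        rw [map_sub, Finsupp.sub_apply, Module.Basis.repr_sum_self, Module.Basis.repr_sum_self]
        exact huv i)
      have h3 : (C : ℤ) * (s : ℤ) ^ n < (q : ℤ) ^ 2 := by exact_mod_cast hs2
      omega
    constructor
    · have : S.card ≤ (Fintype.piFinset (fun _ : ι => Finset.range (X / s + 1))).card := by
        apply Finset.card_le_card_of_injOn (fun v i => v i / s)
        · intro v hv
          simp only [Finset.mem_coe, Finset.mem_range,
            Fintype.mem_piFinset]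
          intro i
          have := Nat.div_le_div_right (c := s) ((hS v hv).1 i).le
          omega
        · intro u hu v hv huv
          refine key u hu v hv (fun i => ?_)
          have h1 : u i / s = v i / s := congrFun huv i
          have h2 := Nat.div_add_mod (u i) s
          have h3 := Nat.div_add_mod (v i) s
          have h4 := Nat.mod_lt (u i) (show s > 0 by omega)
          have h5 := Nat.mod_lt (v i) (show s > 0 by omega)
          rw [h1] at h2
          rw [abs_le]
          constructor <;> omega
      simpa using this
    · intro hXs
      rw [Finset.card_le_one]
      intro u hu v hv
      refine key u hu v hv (fun i => ?_)
      have h1 := (hS u hu).1 i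
      have h2 := (hS v hv).1 i
      rw [abs_le]
      constructor <;> omega
  have hq0 : (0 : ℝ) < (q : ℝ) ^ 2 := by
    have : 0 < q := by omega
    positivity
  rcases lt_or_ge X s with hXs | hXs
  · have := hinj.2 hXs
    have h1 : (S.card : ℝ) ≤ 1 := by exact_mod_cast this
    have : (0 : ℝ) ≤ 4 ^ n * C * X ^ n * ((q : ℝ) ^ 2)⁻¹ := by positivity
    linarith
  · have h1 : (S.card : ℝ) ≤ ((X / s + 1 : ℕ) : ℝ) ^ n := by exact_mod_cast hinj.1
    have hs0 : (0 : ℝ) < s := by exact_mod_cast hs1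
    have h2 : ((X / s + 1 : ℕ) : ℝ) ≤ 2 * X / s := by
      push_cast
      have h3 : ((X / s : ℕ) : ℝ) ≤ X / s := Nat.cast_div_le
      have h4 : (1 : ℝ) ≤ X / s := by
        rw [le_div_iff₀ hs0, one_mul]; exact_mod_cast hXs
      rw [mul_div_assoc]
      linarith
    have h3 : (q : ℝ) ^ 2 ≤ C * (2 * s) ^ n := by
      have h4 : (q : ℝ) ^ 2 ≤ C * (s + 1) ^ n := by exact_mod_cast hs3
      refine h4.trans ?_
      have : (1 : ℝ) ≤ s := by exact_mod_cast hs1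
      gcongr
      linarith
    have h4 : (2 * (X : ℝ) / s) ^ n ≤ 4 ^ n * C * X ^ n * ((q : ℝ) ^ 2)⁻¹ := by
      rw [div_pow, div_le_iff₀ (by positivity), mul_assoc, mul_assoc, mul_assoc, ← div_eq_inv_mul]
      have : (4 : ℝ) ^ n = 2 ^ n * 2 ^ n := by rw [← mul_pow]; norm_num
      rw [this, mul_pow]
      have h5 : (1 : ℝ) ≤ C * (2 * s) ^ n / (q : ℝ) ^ 2 := by
        rwa [le_div_iff₀ hq0, one_mul]
      calc (2 : ℝ) ^ n * X ^ n = 2 ^ n * X ^ n * 1 := by ring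
        _ ≤ 2 ^ n * X ^ n * (C * (2 * s) ^ n / (q : ℝ) ^ 2) := by gcongr
        _ = _ := by rw [mul_pow]; ring
    calc (S.card : ℝ) ≤ _ := h1
      _ ≤ (2 * X / s) ^ n := by gcongr
      _ ≤ _ := h4
      _ ≤ _ := by linarith

theorem kf_sieve (K : Type*) [Field K] [NumberField K] :
    ∃ B : ℕ, ∀ N : ℕ, 1 ≤ N → (∀ q : ℕ, q.Prime → q ≤ B → q ∣ N) → ∀ b : 𝓞 K,
      (∀ y : 𝓞 K, b + N * y ≠ 0) →
      ∃ y : 𝓞 K, ∀ P : Ideal (𝓞 K), P.IsPrime → P ≠ ⊥ → (N : 𝓞 K) ∉ P →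
        b + N * y ∉ P ^ 2 := by
  classical
  let ι := Module.Free.ChooseBasisIndex ℤ (𝓞 K)
  let w : Module.Basis ι ℤ (𝓞 K) := Module.Free.chooseBasis ℤ (𝓞 K)
  obtain ⟨n, hn⟩ : ∃ n, n = Fintype.card ι := ⟨_, rfl⟩
  have hfin : Module.finrank ℤ (𝓞 K) = n := by
    rw [hn]; exact Module.finrank_eq_card_chooseBasisIndex ℤ (𝓞 K)
  have hn1 : 1 ≤ n := by
    rw [← hfin, RingOfIntegers.rank]
    exact Module.finrank_pos
  obtain ⟨C, hC1, hC⟩ : ∃ C : ℕ, 1 ≤ C ∧ ∀ (z : 𝓞 K) (s : ℕ), (∀ i, |w.repr z i| ≤ s) → 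
      |Algebra.norm ℤ z| ≤ C * (s : ℤ) ^ Fintype.card ι := by
    have hpos := ClassGroup.normBound_pos AbsoluteValue.abs w
    refine ⟨(ClassGroup.normBound AbsoluteValue.abs w).toNat, by omega, ?_⟩
    intro z s hz
    rw [Int.toNat_of_nonneg hpos.le]
    exact ClassGroup.norm_le AbsoluteValue.abs w z hz
  refine ⟨4 * n * 4 ^ n * C, ?_⟩
  obtain ⟨B, hB⟩ : ∃ B, B = 4 * n * 4 ^ n * C := ⟨_, rfl⟩
  rw [← hB]
  have hBC : C ≤ B := by
    rw [hB]; exact Nat.le_mul_of_pos_left _ (by positivity)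
  intro N hN hNB b hb
  obtain ⟨c, hc⟩ : ∃ c : ℕ, ∀ i, |w.repr b i| ≤ c := by
    refine ⟨(∑ i, |w.repr b i|).toNat, fun i => ?_⟩
    rw [Int.toNat_of_nonneg (Finset.sum_nonneg (fun i _ => abs_nonneg _))]
    exact Finset.single_le_sum (f := fun i => |w.repr b i|) (fun i _ => abs_nonneg _) (Finset.mem_univ i)
  obtain ⟨D, hD⟩ : ∃ D, D = C * (c + N) ^ n := ⟨_, rfl⟩
  have hD1 : 1 ≤ D := by
    rw [hD]
    have : 1 ≤ (c + N) ^ n := Nat.one_le_pow _ _ (by omega)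
    nlinarith
  obtain ⟨T, hT⟩ : ∃ T, T = 2 * n * D + 1 := ⟨_, rfl⟩
  have hTn : T ≤ T ^ n := Nat.le_self_pow (by omega) _
  have hX1 : 1 ≤ T ^ 2 := Nat.one_le_pow _ _ (by omega)
  choose Sp hSp1 hSp2 hSp3 using kf_primes_over (K := K)
  by_contra hcon
  push Not at hcon
  let yv : (ι → ℕ) → 𝓞 K := fun v => ∑ i, (v i : ℤ) • w i
  let Box : Finset (ι → ℕ) := Fintype.piFinset (fun _ : ι => Finset.range (T ^ 2))
  let Qs : Finset ℕ := (Finset.Ioc B (D * T ^ n)).filter (fun q => q.Prime ∧ ¬ q ∣ N)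
  let F : Ideal (𝓞 K) → Finset (ι → ℕ) := fun P =>
    Box.filter (fun v => (N : 𝓞 K) ∉ P ∧ b + N * yv v ∈ P ^ 2)
  have hBox : ∀ v, v ∈ Box ↔ ∀ i, v i < T ^ 2 := by
    intro v; simp [Box, Fintype.mem_piFinset]
  have hcover : Box ⊆ Qs.biUnion (fun q => (Sp q).biUnion F) := by
    intro v hv
    obtain ⟨P, hP, hP0, hNP, hmem⟩ := hcon (yv v)
    obtain ⟨q, hq, hqP⟩ := kf_exists_prime P hP hP0
    have hqN : ¬ q ∣ N := by
      rintro ⟨t, rfl⟩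
      apply hNP
      rw [Nat.cast_mul]
      exact P.mul_mem_right _ hqP
    have hqB : B < q := by
      by_contra h
      exact hqN (hNB q hq (by omega))
    have h1 := kf_norm_ge P hP q hq hqP 2 _ hmem (hb _)
    have h2 := hC (b + N * yv v) ((c + N) * T ^ 2) (by
      intro i
      have e1 : (N : 𝓞 K) * yv v = (N : ℤ) • yv v := by simp
      rw [e1, map_add, map_smul, Finsupp.add_apply, Finsupp.smul_apply]
      simp only [yv]
      rw [Module.Basis.repr_sum_self]
      have h3 := hc i
      have h4 := (hBox v).1 hv i
      have h5 : ((v i : ℤ)) ≤ (T : ℤ) ^ 2 := by exact_mod_cast h4.le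
      have h6 : (1 : ℤ) ≤ (T : ℤ) ^ 2 := by exact_mod_cast hX1
      rw [abs_le] at h3 ⊢
      push_cast
      simp only [smul_eq_mul]
      have h7 : (0 : ℤ) ≤ N * v i := by positivity
      have h8 : (N : ℤ) * v i ≤ N * T ^ 2 := by gcongr
      have h9 : (c : ℤ) ≤ c * T ^ 2 := by nlinarith
      have h10 : (0 : ℤ) ≤ N * T ^ 2 := by positivity
      constructor <;> nlinarith)
    have h3 : q ^ 2 ≤ (D * T ^ n) ^ 2 := by
      have h4 : q ^ 2 ≤ C * ((c + N) * T ^ 2) ^ n := by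
        have := h1.trans h2
        rw [← hn] at this
        exact_mod_cast this
      calc q ^ 2 ≤ _ := h4
        _ = D * (T ^ n) ^ 2 := by rw [hD, mul_pow]; ring
        _ ≤ D ^ 2 * (T ^ n) ^ 2 := by
          gcongr
          exact Nat.le_self_pow (by omega) _
        _ = _ := by ring
    have h4 : q ≤ D * T ^ n := (Nat.pow_le_pow_iff_left (by omega)).1 h3
    simp only [Finset.mem_biUnion]
    refine ⟨q, ?_, P, hSp3 q hq P hP hqP, ?_⟩
    · simp only [Qs, Finset.mem_filter, Finset.mem_Ioc]
      exact ⟨⟨hqB, h4⟩, hq, hqN⟩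
    · simp only [F, Finset.mem_filter]
      exact ⟨hv, hNP, hmem⟩
  have hFcard : ∀ q ∈ Qs, ∀ P ∈ Sp q, ((F P).card : ℝ) ≤
      4 ^ n * C * (T ^ 2 : ℕ) ^ n * ((q : ℝ) ^ 2)⁻¹ + 1 := by
    intro q hq P hPS
    simp only [Qs, Finset.mem_filter, Finset.mem_Ioc] at hq
    obtain ⟨⟨hqB, hqQ⟩, hqp, hqN⟩ := hq
    obtain ⟨hP, hqP⟩ := hSp2 q hqp P hPS
    have hNP : (N : 𝓞 K) ∉ P := by
      intro h
      apply hqN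
      have := kf_dvd_of_mem P hP q hqp hqP (N : ℤ) (by exact_mod_cast h)
      exact_mod_cast this
    have := kf_pack w C hC hC1 (by rw [← hn]; exact hn1) {y | b + N * y ∈ P ^ 2} q (by omega) (by
      intro x hx y hy hxy
      apply kf_norm_ge P hP q hqp hqP 2 _ _ (sub_ne_zero.2 hxy)
      have h1 : (N : 𝓞 K) * (x - y) ∈ P ^ 2 := by
        have := (P ^ 2).sub_mem hx hy
        have e : (N : 𝓞 K) * (x - y) = b + N * x - (b + N * y) := by ring
        rw [e]; exact this
      exact (Ideal.IsPrime.mul_mem_pow P h1).resolve_left hNP) (T ^ 2) hX1 (F P) (by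
      intro v hv
      simp only [F, Finset.mem_filter] at hv
      exact ⟨(hBox v).1 hv.1, hv.2.2⟩)
    rw [← hn] at this
    exact this
  have hcard : (((T ^ 2 : ℕ) : ℝ)) ^ n ≤
      ∑ q ∈ Qs, ∑ P ∈ Sp q, ((F P).card : ℝ) := by
    have h1 : (T ^ 2) ^ n = Box.card := by simp [Box, hn]
    have h2 : Box.card ≤ ∑ q ∈ Qs, ∑ P ∈ Sp q, (F P).card :=
      (Finset.card_le_card hcover).trans (Finset.card_biUnion_le.trans
        (Finset.sum_le_sum (fun q _ => Finset.card_biUnion_le)))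
    rw [← h1] at h2
    exact_mod_cast h2
  obtain ⟨Y, hY⟩ : ∃ Y : ℝ, Y = (((T ^ 2 : ℕ) : ℝ)) ^ n := ⟨_, rfl⟩
  rw [← hY] at hcard hFcard
  have hY0 : 0 < Y := by
    rw [hY]
    have : (0 : ℝ) < ((T ^ 2 : ℕ) : ℝ) := by exact_mod_cast hX1
    positivity
  have hQs : ∑ q ∈ Qs, ∑ P ∈ Sp q, ((F P).card : ℝ) ≤
      ∑ q ∈ Finset.Ioc B (D * T ^ n), n * (4 ^ n * C * Y * ((q : ℝ) ^ 2)⁻¹ + 1) := by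
    calc _ ≤ ∑ q ∈ Qs, n * (4 ^ n * C * Y * ((q : ℝ) ^ 2)⁻¹ + 1) := by
          apply Finset.sum_le_sum
          intro q hq
          calc _ ≤ ∑ P ∈ Sp q, (4 ^ n * C * Y * ((q : ℝ) ^ 2)⁻¹ + 1) :=
                Finset.sum_le_sum (hFcard q hq)
            _ = (Sp q).card * (4 ^ n * C * Y * ((q : ℝ) ^ 2)⁻¹ + 1) := by rw [Finset.sum_const, nsmul_eq_mul]
            _ ≤ _ := by
              have : ((Sp q).card : ℝ) ≤ n := by
                have := hSp1 q
                rw [hfin] at this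
                exact_mod_cast this
              gcongr
      _ ≤ _ := by
          apply Finset.sum_le_sum_of_subset_of_nonneg (Finset.filter_subset _ _)
          intro q _ _
          positivity
  have hB0 : (0 : ℝ) < B := by
    have : 0 < B := by omega
    exact_mod_cast this
  have hsum : ∑ q ∈ Finset.Ioc B (D * T ^ n), ((q : ℝ) ^ 2)⁻¹ ≤ (B : ℝ)⁻¹ := by
    rcases le_or_gt B (D * T ^ n) with h | h
    · have h1 := sum_Ioc_inv_sq_le_sub (α := ℝ) (k := B) (n := D * T ^ n) (by omega) h
      have : (0 : ℝ) ≤ (((D * T ^ n : ℕ)) : ℝ)⁻¹ := by positivity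
      linarith
    · rw [Finset.Ioc_eq_empty (by omega)]
      simp [hB0.le]
  have htot : ∑ q ∈ Finset.Ioc B (D * T ^ n), (n : ℝ) * (4 ^ n * C * Y * ((q : ℝ) ^ 2)⁻¹ + 1) ≤
      n * 4 ^ n * C * Y * (B : ℝ)⁻¹ + n * (D * T ^ n) := by
    have e : ∀ q : ℕ, (n : ℝ) * (4 ^ n * C * Y * ((q : ℝ) ^ 2)⁻¹ + 1) =
      n * 4 ^ n * C * Y * ((q : ℝ) ^ 2)⁻¹ + n := by intro q; ring
    simp only [e]
    rw [Finset.sum_add_distrib, ← Finset.mul_sum, Finset.sum_const, Nat.card_Ioc, nsmul_eq_mul]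
    have h1 : ((D * T ^ n - B : ℕ) : ℝ) ≤ D * T ^ n := by
      have : D * T ^ n - B ≤ D * T ^ n := Nat.sub_le _ _
      exact_mod_cast this
    have h2 : ((D * T ^ n - B : ℕ) : ℝ) * n ≤ n * (D * T ^ n) := by
      rw [mul_comm]; gcongr
    have h3 : n * 4 ^ n * C * Y * ∑ q ∈ Finset.Ioc B (D * T ^ n), ((q : ℝ) ^ 2)⁻¹ ≤
      n * 4 ^ n * C * Y * (B : ℝ)⁻¹ := by gcongr
    linarith
  have hfirst : n * 4 ^ n * C * Y * (B : ℝ)⁻¹ = Y / 4 := by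
    have : (B : ℝ) = 4 * (n * 4 ^ n * C) := by rw [hB]; push_cast; ring
    have h0 : (n * 4 ^ n * C : ℝ) ≠ 0 := by
      intro h; rw [h] at this; simp at this; simp [this] at hB0
    rw [this]
    field_simp
  have hsecond : (n * (D * T ^ n) : ℝ) ≤ Y / 2 := by
    have hY2 : Y = (T : ℝ) ^ n * (T : ℝ) ^ n := by
      rw [hY]; push_cast; ring
    rw [hY2]
    have h1 : (2 * n * D : ℝ) ≤ (T : ℝ) ^ n := by
      have : 2 * n * D ≤ T ^ n := by omega
      exact_mod_cast this
    have h2 : (0 : ℝ) ≤ (T : ℝ) ^ n := by positivity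
    nlinarith
  linarith

/-- Avoidance of a small union of ideals. -/
theorem kf_avoid {R : Type*} [CommRing R] (p j : ℕ) (hp : p.Prime) (L : AddSubgroup R)
    (S : Finset (Ideal R)) (hS : S.card < p) (hpS : ∀ I ∈ S, (p : R) ^ j ∈ I)
    (h : ∀ I ∈ S, ∃ a ∈ L, a ∉ I) : ∃ a ∈ L, ∀ I ∈ S, a ∉ I := by
  classical
  have hdiv : ∀ I ∈ S, ∀ (x : R) (d : ℤ), ¬ (p : ℤ) ∣ d → (d : R) * x ∈ I → x ∈ I := by
    intro I hI x d hd hx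
    have hc : IsCoprime ((p : ℤ) ^ j) d := by
      apply IsCoprime.pow_left
      exact (Prime.coprime_iff_not_dvd (Nat.prime_iff_prime_int.1 hp)).2 hd
    obtain ⟨u, v, huv⟩ := hc
    have e : x = (u : R) * x * (p : R) ^ j + v * (d * x) := by
      have h1 : (u : R) * (p : R) ^ j + v * d = 1 := by exact_mod_cast congrArg (Int.cast : ℤ → R) huv
      calc x = 1 * x := by ring
        _ = _ := by rw [← h1]; ring
    rw [e]
    exact I.add_mem (I.mul_mem_left _ (hpS I hI)) (I.mul_mem_left _ hx)
  induction S using Finset.induction_on with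
  | empty => exact ⟨0, L.zero_mem, by simp⟩
  | insert J S hJ ih =>
    have hcard := Finset.card_insert_of_notMem hJ
    obtain ⟨a, haL, ha⟩ := ih (by omega) (fun I hI => hpS I (Finset.mem_insert_of_mem hI))
      (fun I hI => h I (Finset.mem_insert_of_mem hI))
      (fun I hI => hdiv I (Finset.mem_insert_of_mem hI))
    obtain ⟨b, hbL, hb⟩ := h J (Finset.mem_insert_self _ _)
    by_contra hcon
    push Not at hcon
    have hL : ∀ t : ℕ, a + t * b ∈ L := by
      intro t
      have : (t : R) * b = t • b := by simp
      rw [this]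
      exact L.add_mem haL (L.nsmul_mem hbL t)
    choose f hf1 hf2 using fun t : ℕ => hcon _ (hL t)
    obtain ⟨t, ht, t', ht', hne, heq⟩ := Finset.exists_ne_map_eq_of_card_lt_of_maps_to
      (s := Finset.range p) (t := insert J S) (f := f) (by simpa using hS) (fun t _ => hf1 t)
    simp only [Finset.mem_range] at ht ht'
    have hbI : b ∈ f t := by
      refine hdiv _ (hf1 t) b ((t : ℤ) - t') ?_ ?_
      · intro hd
        have := Int.eq_zero_of_abs_lt_dvd hd (by rw [abs_lt]; constructor <;> omega)
        omega
      · have h1 := (f t).sub_mem (hf2 t) (heq ▸ hf2 t')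
        have e : (((t : ℤ) - t' : ℤ) : R) * b = a + t * b - (a + t' * b) := by push_cast; ring
        rw [e]; exact h1
    have haI : a ∈ f t := by
      have h1 := (f t).sub_mem (hf2 t) ((f t).mul_mem_left (t : R) hbI)
      simpa using h1
    rcases Finset.mem_insert.1 (hf1 t) with h1 | h1
    · rw [h1] at hbI; exact hb hbI
    · exact ha _ h1 haI

theorem kf_prim (K : Type*) [Field K] [NumberField K] :
    ∃ α : 𝓞 K, α ≠ 0 ∧ ∀ x : 𝓞 K, ∃ d : ℤ, d ≠ 0 ∧ ∃ g : Polynomial ℤ,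
      (d : 𝓞 K) * x = Polynomial.aeval α g := by
  obtain ⟨α, hα⟩ : ∃ α : 𝓞 K, IntermediateField.adjoin ℚ {(α : K)} = ⊤ := by
    obtain ⟨β, hβ⟩ := Field.exists_primitive_element ℚ K
    have halg : IsAlgebraic ℤ β :=
      (IsFractionRing.isAlgebraic_iff ℤ ℚ K).2 (Algebra.IsAlgebraic.isAlgebraic β)
    obtain ⟨c, hc0, hc⟩ := halg.exists_integral_multiple
    refine ⟨⟨c • β, hc⟩, ?_⟩
    rw [eq_top_iff, ← hβ, IntermediateField.adjoin_simple_le_iff]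
    have h1 : c • β ∈ IntermediateField.adjoin ℚ {(c • β : K)} :=
      IntermediateField.mem_adjoin_simple_self ℚ _
    have h2 := IntermediateField.smul_mem _ h1 (x := ((c : ℚ)⁻¹))
    have hcK : (c : K) ≠ 0 := by exact_mod_cast hc0
    have e : ((c : ℚ)⁻¹) • c • β = β := by
      rw [zsmul_eq_mul, Algebra.smul_def]
      simp [hcK]
    rw [e] at h2
    exact h2
  have hx : ∀ x : 𝓞 K, ∃ d : ℤ, d ≠ 0 ∧ ∃ g : Polynomial ℤ,
      (d : 𝓞 K) * x = Polynomial.aeval α g := by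
    intro x
    have hxm : (x : K) ∈ IntermediateField.adjoin ℚ {(α : K)} := by rw [hα]; trivial
    rw [← IntermediateField.mem_toSubalgebra,
      IntermediateField.adjoin_simple_toSubalgebra_of_isAlgebraic
        (Algebra.IsAlgebraic.isAlgebraic _), Algebra.adjoin_singleton_eq_range_aeval] at hxm
    obtain ⟨f, hf⟩ := hxm
    obtain ⟨d, hd⟩ := IsLocalization.integerNormalization_map_to_map (nonZeroDivisors ℤ) f
    refine ⟨d, nonZeroDivisors.coe_ne_zero d, IsLocalization.integerNormalization (nonZeroDivisors ℤ) f, ?_⟩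
    apply RingOfIntegers.coe_injective
    have h1 := congrArg (Polynomial.aeval (α : K)) hd
    rw [Polynomial.aeval_map_algebraMap] at h1
    have h2 : ((Polynomial.aeval α (IsLocalization.integerNormalization (nonZeroDivisors ℤ) f) : 𝓞 K) : K)
      = Polynomial.aeval (α : K) (IsLocalization.integerNormalization (nonZeroDivisors ℤ) f) :=
      (Polynomial.aeval_algebraMap_apply K α _).symm
    refine Eq.trans ?_ h2.symm
    rw [h1, map_zsmul]
    have hf' : Polynomial.aeval (α : K) f = (x : K) := hf
    rw [hf']
    simp
  by_cases h0 : α = 0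
  · refine ⟨1, one_ne_zero, fun x => ?_⟩
    obtain ⟨d, hd, g, hg⟩ := hx x
    refine ⟨d, hd, Polynomial.C (g.coeff 0), ?_⟩
    rw [hg, h0, Polynomial.aeval_C, Polynomial.aeval_def, Polynomial.eval₂_at_zero]
  · exact ⟨α, h0, hx⟩

theorem kf_nonunit {K : Type*} [Field K] [NumberField K] (α : 𝓞 K) (h0 : α ≠ 0) (M : ℕ)
    (hM : M ≠ 0) : ∃ t : ℕ, ¬ IsUnit (1 + (M * t : ℕ) * α) := by
  have hev : ∀ σ : K →ₐ[ℚ] ℂ, ∀ᶠ t : ℕ in Filter.atTop, 2 ≤ ‖σ ((1 + (M * t : ℕ) * α : 𝓞 K) : K)‖ := by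
    intro σ
    have hs : σ (α : K) ≠ 0 := by
      rw [Ne, map_eq_zero]
      exact fun h => h0 (RingOfIntegers.coe_injective (by simpa using h))
    have hpos : 0 < ‖σ (α : K)‖ := norm_pos_iff.2 hs
    obtain ⟨t0, ht0⟩ := exists_nat_ge (3 / ‖σ (α : K)‖)
    filter_upwards [Filter.eventually_ge_atTop t0] with t ht
    have h1 : (3 : ℝ) ≤ t * ‖σ (α : K)‖ := by
      rw [div_le_iff₀ hpos] at ht0
      have : (t0 : ℝ) ≤ t := by exact_mod_cast ht
      nlinarith
    have h2 : (t : ℝ) ≤ ((M * t : ℕ) : ℝ) := by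
      have : t ≤ M * t := Nat.le_mul_of_pos_left _ (by omega)
      exact_mod_cast this
    have e : σ ((1 + (M * t : ℕ) * α : 𝓞 K) : K) = ((M * t : ℕ) : ℂ) * σ (α : K) - (-1) := by
      simp; ring
    rw [e]
    have h3 := norm_sub_norm_le (((M * t : ℕ) : ℂ) * σ (α : K)) (-1)
    rw [norm_mul, Complex.norm_natCast, norm_neg, norm_one] at h3
    nlinarith
  obtain ⟨t, ht⟩ := (Filter.eventually_all.2 hev).exists
  refine ⟨t, fun hu => ?_⟩
  have h1 := hu.map (Algebra.norm ℤ)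
  have h2 := Algebra.norm_eq_prod_embeddings ℚ ℂ ((1 + (M * t : ℕ) * α : 𝓞 K) : K)
  rw [← Algebra.coe_norm_int] at h2
  have h3 := congrArg norm h2
  rw [norm_prod] at h3
  have h4 : (2 : ℝ) ^ (Fintype.card (K →ₐ[ℚ] ℂ)) ≤ ∏ σ : K →ₐ[ℚ] ℂ, ‖σ ((1 + (M * t : ℕ) * α : 𝓞 K) : K)‖ := by
    rw [← Finset.card_univ, ← Finset.prod_const]
    exact Finset.prod_le_prod (fun _ _ => by norm_num) (fun σ _ => ht σ)
  rw [← h3] at h4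
  have h5 : Fintype.card (K →ₐ[ℚ] ℂ) ≠ 0 := by
    rw [AlgHom.card]
    exact Module.finrank_pos.ne'
  have h6 : (1 : ℝ) < 2 ^ (Fintype.card (K →ₐ[ℚ] ℂ)) := one_lt_pow₀ (by norm_num) h5
  have h7 := lt_of_lt_of_le h6 h4
  rcases Int.isUnit_iff.1 h1 with h | h <;> rw [h] at h7 <;> simp at h7

theorem kf_deg_one {K : Type*} [Field K] [NumberField K] (x y : 𝓞 K) (M : ℕ) :
    ∃ p : ℕ, p.Prime ∧ M < p ∧ ∃ P : Ideal (𝓞 K), P.IsPrime ∧ (p : 𝓞 K) ∈ P ∧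
      ∃ m l : ℤ, x - m ∈ P ∧ y - l ∈ P := by
  obtain ⟨α, hα0, hα⟩ := kf_prim K
  obtain ⟨d1, hd1, g1, hg1⟩ := hα x
  obtain ⟨d2, hd2, g2, hg2⟩ := hα y
  obtain ⟨M', hM'⟩ : ∃ M', M' = M + d1.natAbs + d2.natAbs := ⟨_, rfl⟩
  obtain ⟨t, ht⟩ := kf_nonunit α hα0 (M'.factorial) (Nat.factorial_ne_zero _)
  obtain ⟨P, hPmax, hzP⟩ := exists_max_ideal_of_mem_nonunits ht
  have hP := hPmax.isPrime
  have hP0 : P ≠ ⊥ := Ring.ne_bot_of_isMaximal_of_not_isField hPmax (RingOfIntegers.not_isField K)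
  obtain ⟨p, hp, hpP⟩ := kf_exists_prime P hP hP0
  have h1P : (1 : 𝓞 K) ∉ P := fun h => hP.ne_top ((Ideal.eq_top_iff_one P).2 h)
  have hps : ¬ (p : ℤ) ∣ ((M'.factorial * t : ℕ) : ℤ) := by
    intro h
    have h' : p ∣ M'.factorial * t := by exact_mod_cast h
    obtain ⟨c, hc⟩ := h'
    apply h1P
    rw [hc] at hzP
    have h2 : ((p * c : ℕ) : 𝓞 K) * α ∈ P := by
      rw [Nat.cast_mul, mul_assoc]
      exact P.mul_mem_right _ hpP
    have := P.sub_mem hzP h2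
    simpa using this
  have hpM : M' < p := by
    by_contra h
    apply hps
    have : p ∣ M'.factorial * t := Dvd.dvd.mul_right (hp.dvd_factorial.2 (by omega)) _
    exact_mod_cast this
  have hinv : ∀ d : ℤ, ¬ (p : ℤ) ∣ d → ∃ u : ℤ, (u : 𝓞 K) * d - 1 ∈ P := by
    intro d hd
    obtain ⟨v, u, huv⟩ := (Prime.coprime_iff_not_dvd (Nat.prime_iff_prime_int.1 hp)).2 hd
    refine ⟨u, ?_⟩
    have : (v : 𝓞 K) * p + u * d = 1 := by exact_mod_cast congrArg (Int.cast : ℤ → 𝓞 K) huv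
    have e : (u : 𝓞 K) * d - 1 = -(v * p) := by rw [← this]; ring
    rw [e]
    exact P.neg_mem (P.mul_mem_left _ hpP)
  obtain ⟨u, hu⟩ := hinv _ hps
  have hα' : α - ((-u : ℤ) : 𝓞 K) ∈ P := by
    have h1 := P.mul_mem_left (u : 𝓞 K) hzP
    have h2 := P.mul_mem_right α hu
    have := P.sub_mem h1 h2
    convert! this using 1
    push_cast
    ring
  have hg : ∀ g : Polynomial ℤ, ∃ c : ℤ, Polynomial.aeval α g - (c : 𝓞 K) ∈ P := by
    intro g
    refine ⟨g.eval (-u), ?_⟩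
    have h1 := Polynomial.sub_dvd_eval_sub α ((-u : ℤ) : 𝓞 K) (g.map (algebraMap ℤ (𝓞 K)))
    rw [Polynomial.eval_map_algebraMap, Polynomial.eval_map_algebraMap] at h1
    have e : Polynomial.aeval ((-u : ℤ) : 𝓞 K) g = ((g.eval (-u) : ℤ) : 𝓞 K) := by
      have := Polynomial.aeval_algebraMap_apply (𝓞 K) (-u : ℤ) g
      simpa using this
    rw [e] at h1
    exact P.mem_of_dvd h1 hα'
  have hfin : ∀ (x : 𝓞 K) (d : ℤ), d ≠ 0 → d.natAbs ≤ M' → ∀ g : Polynomial ℤ,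
      (d : 𝓞 K) * x = Polynomial.aeval α g → ∃ m : ℤ, x - m ∈ P := by
    intro x d hd hdM g hgx
    obtain ⟨v, hv⟩ := hinv d (by
      intro h
      have h1 := Int.natAbs_dvd_natAbs.2 h
      have h2 := Nat.le_of_dvd (Int.natAbs_pos.2 hd) h1
      simp at h2
      omega)
    obtain ⟨c, hc⟩ := hg g
    rw [← hgx] at hc
    refine ⟨v * c, ?_⟩
    have h1 := P.mul_mem_left (v : 𝓞 K) hc
    have h2 := P.mul_mem_right x hv
    have := P.sub_mem h1 h2
    convert! this using 1
    push_cast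
    ring
  obtain ⟨m, hm⟩ := hfin x d1 hd1 (by omega) g1 hg1
  obtain ⟨l, hl⟩ := hfin y d2 hd2 (by omega) g2 hg2
  exact ⟨p, hp, by omega, P, hP, hpP, m, l, hm, hl⟩

theorem kf_unram {K : Type*} [Field K] [NumberField K] (p : ℕ) (hp : p.Prime)
    (hpD : Ideal.absNorm (differentIdeal ℤ (𝓞 K)) < p) (Q : Ideal (𝓞 K)) (hQ : Q.IsPrime)
    (hpQ : (p : 𝓞 K) ∈ Q) : (p : 𝓞 K) ∉ Q ^ 2 := by
  intro h
  have : Fact p.Prime := ⟨hp⟩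
  have hb : (Ideal.span {(p : ℤ)}) ≠ ⊥ := by
    simp [hp.ne_zero]
  have : (Ideal.span {(p : ℤ)}).IsMaximal := Int.ideal_span_isMaximal_of_prime p
  have h1 : Q ^ 2 ∣ Ideal.map (algebraMap ℤ (𝓞 K)) (Ideal.span {(p : ℤ)}) := by
    rw [Ideal.dvd_iff_le, Ideal.map_span, Ideal.span_le]
    simpa using h
  have h2 := pow_sub_one_dvd_differentIdeal ℤ Q 2 hb h1
  have h3 : differentIdeal ℤ (𝓞 K) ≤ Q := by
    rw [← Ideal.dvd_iff_le]; simpa using h2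
  have h4 : Ideal.absNorm (differentIdeal ℤ (𝓞 K)) ≠ 0 := by
    rw [Ne, Ideal.absNorm_eq_zero_iff]; exact differentIdeal_ne_bot
  have h5 := kf_dvd_of_mem Q hQ p hp hpQ (Ideal.absNorm (differentIdeal ℤ (𝓞 K)) : ℤ)
    (by exact_mod_cast h3 (Ideal.absNorm_mem _))
  have h6 : p ∣ Ideal.absNorm (differentIdeal ℤ (𝓞 K)) := by exact_mod_cast h5
  have := Nat.le_of_dvd (Nat.pos_of_ne_zero h4) h6
  omega

theorem kf_descend {K : Type*} [Field K] [NumberField K] (p : ℕ) (Q : Ideal (𝓞 K)) (hQ : Q.IsPrime)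
    (hQ0 : Q ≠ ⊥) (hpQ : (p : 𝓞 K) ∈ Q) (hp2 : (p : 𝓞 K) ∉ Q ^ 2) (j : ℕ) (x : 𝓞 K)
    (hx : (p : 𝓞 K) ^ j * x ∈ Q ^ (j + 1)) : x ∈ Q := by
  by_contra hxQ
  have h1 : (p : 𝓞 K) ^ j ∈ Q ^ (j + 1) := by
    rw [mul_comm] at hx
    exact (Ideal.IsPrime.mul_mem_pow Q hx).resolve_left hxQ
  obtain ⟨J, hJ⟩ : Q ∣ Ideal.span {(p : 𝓞 K)} := by
    rw [Ideal.dvd_span_singleton]; exact hpQ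
  have h2 : Q ^ (j + 1) ∣ (Ideal.span {(p : 𝓞 K)}) ^ j := by
    rw [Ideal.span_singleton_pow, Ideal.dvd_span_singleton]; exact h1
  have hprime : Prime Q := Ideal.prime_of_isPrime hQ0 hQ
  rw [hJ, mul_pow, pow_succ] at h2
  have h3 : Q ∣ J ^ j := (mul_dvd_mul_iff_left (pow_ne_zero _ hprime.ne_zero)).1 h2
  have h4 := hprime.dvd_of_dvd_pow h3
  apply hp2
  rw [← Ideal.dvd_span_singleton, hJ, pow_two]
  exact mul_dvd_mul_left _ h4

theorem kf_main {K : Type*} [Field K] [NumberField K] (k : ℕ) (hk : 2 ≤ k)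
    (A : 𝓞 K ≃ₗ[ℤ] 𝓞 K) (hA : ⇑A '' kfreeSet K k = kfreeSet K k) (x y : 𝓞 K) :
    A (x * y) * A 1 = A x * A y := by
  classical
  by_contra hne
  have hw : A (x * y) * A 1 - A x * A y ≠ 0 := sub_ne_zero.2 hne
  obtain ⟨B, hB⟩ := kf_sieve K
  obtain ⟨p, hp, hpM, P, hP, hpP, m, l, hxm, hyl⟩ := kf_deg_one x y
    (B + Module.finrank ℤ (𝓞 K) + (Algebra.norm ℤ (A (x * y) * A 1 - A x * A y)).natAbs
      + Ideal.absNorm (differentIdeal ℤ (𝓞 K)))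
  have hbot : ∀ R : Ideal (𝓞 K), (p : 𝓞 K) ∈ R → R ≠ ⊥ := by
    rintro R hR rfl
    simp only [Ideal.mem_bot, Nat.cast_eq_zero] at hR
    exact hp.ne_zero hR
  have hAmul : ∀ (n : ℕ) (z : 𝓞 K), A (n * z) = n * A z := by
    intro n z
    rw [← nsmul_eq_mul, map_nsmul, nsmul_eq_mul]
  have hAint : ∀ (n : ℤ) (z : 𝓞 K), A (n * z) = n * A z := by
    intro n z
    rw [← zsmul_eq_mul, map_zsmul, zsmul_eq_mul]
  -- the key inclusion
  obtain ⟨Q, hQ, hpQ, hPQ⟩ : ∃ Q : Ideal (𝓞 K), Q.IsPrime ∧ (p : 𝓞 K) ∈ Q ∧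
      ∀ z ∈ P ^ k, A z ∈ Q ^ k := by
    by_contra hcon
    push Not at hcon
    obtain ⟨S, hS1, hS2, hS3⟩ := kf_primes_over (K := K) p
    obtain ⟨a, haL, ha⟩ := kf_avoid p k hp
      ((P ^ k).toAddSubgroup.map (A.toLinearMap.toAddMonoidHom)) (S.image (· ^ k))
      (lt_of_le_of_lt Finset.card_image_le (by omega))
      (by
        intro I hI
        obtain ⟨R, hR, rfl⟩ := Finset.mem_image.1 hI
        exact Ideal.pow_mem_pow (hS2 hp R hR).2 k)
      (by
        intro I hI
        obtain ⟨R, hR, rfl⟩ := Finset.mem_image.1 hI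
        obtain ⟨z, hz, hz'⟩ := hcon R (hS2 hp R hR).1 (hS2 hp R hR).2
        exact ⟨A z, ⟨z, hz, rfl⟩, hz'⟩)
    obtain ⟨a', ha', rfl⟩ := haL
    have ha'' : ∀ R : Ideal (𝓞 K), R.IsPrime → (p : 𝓞 K) ∈ R → A a' ∉ R ^ k := fun R hR hpR =>
      ha _ (Finset.mem_image.2 ⟨R, hS3 hp R hR hpR, rfl⟩)
    have hcop : IsCoprime ((p : ℤ) ^ k) (B.factorial : ℤ) := by
      apply IsCoprime.pow_left
      rw [Prime.coprime_iff_not_dvd (Nat.prime_iff_prime_int.1 hp)]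
      intro h
      have h' : p ∣ B.factorial := by exact_mod_cast h
      have := hp.dvd_factorial.1 h'
      omega
    obtain ⟨u, v, huv⟩ := hcop
    have huv' : (u : 𝓞 K) * (p : 𝓞 K) ^ k + v * (B.factorial : 𝓞 K) = 1 := by
      exact_mod_cast congrArg (Int.cast : ℤ → 𝓞 K) huv
    have hform : ∀ z : 𝓞 K, ∃ t : 𝓞 K, (v * (B.factorial : 𝓞 K)) * A a' + u * (p : 𝓞 K) ^ k +
        ((p ^ k * B.factorial : ℕ) : 𝓞 K) * z = A a' + ((p ^ k : ℕ) : 𝓞 K) * t := by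
      intro z
      refine ⟨u * (1 - A a') + (B.factorial : 𝓞 K) * z, ?_⟩
      have e : v * (B.factorial : 𝓞 K) = 1 - u * (p : 𝓞 K) ^ k := by rw [← huv']; ring
      rw [e]
      push_cast
      ring
    have hnotmem : ∀ t : 𝓞 K, ∀ R : Ideal (𝓞 K), R.IsPrime → (p : 𝓞 K) ∈ R →
        A a' + ((p ^ k : ℕ) : 𝓞 K) * t ∉ R ^ k := by
      intro t R hR hpR h
      apply ha'' R hR hpR
      have h1 : ((p ^ k : ℕ) : 𝓞 K) * t ∈ R ^ k := by
        push_cast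
        exact (R ^ k).mul_mem_right _ (Ideal.pow_mem_pow hpR k)
      simpa using (R ^ k).sub_mem h h1
    obtain ⟨z, hz⟩ := hB (p ^ k * B.factorial) 
      (Nat.mul_pos (pow_pos hp.pos _) (Nat.factorial_pos _))
      (fun q hq hqB => Dvd.dvd.mul_left (hq.dvd_factorial.2 hqB) _)
      ((v * (B.factorial : 𝓞 K)) * A a' + u * (p : 𝓞 K) ^ k)
      (by
        intro z hz
        obtain ⟨t, ht⟩ := hform z
        rw [hz] at ht
        apply hnotmem t P hP hpP
        rw [← ht]
        exact zero_mem _)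
    obtain ⟨t, ht⟩ := hform z
    have hfree : A a' + ((p ^ k : ℕ) : 𝓞 K) * t ∈ kfreeSet K k := by
      intro R hR hR0 hmem
      by_cases hNR : ((p ^ k * B.factorial : ℕ) : 𝓞 K) ∈ R
      · rw [Nat.cast_mul] at hNR
        rcases hR.mem_or_mem hNR with h | h
        · rw [Nat.cast_pow] at h
          exact hnotmem t R hR (hR.mem_of_pow_mem _ h) hmem
        · rw [← ht] at hmem
          have h1 := Ideal.pow_le_self (by omega) hmem
          apply hR.ne_top
          rw [Ideal.eq_top_iff_one, ← huv']
          have h2 : (v * (B.factorial : 𝓞 K)) ∈ R := R.mul_mem_left _ h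
          refine R.add_mem ?_ h2
          have h3 := R.mul_mem_right (A a') h2
          have h4 : ((p ^ k * B.factorial : ℕ) : 𝓞 K) * z ∈ R := by
            rw [Nat.cast_mul]
            exact R.mul_mem_right _ (R.mul_mem_left _ h)
          have h5 := R.sub_mem (R.sub_mem h1 h3) h4
          convert! h5 using 1
          ring
      · apply hz R hR hR0 hNR
        rw [ht]
        exact Ideal.pow_le_pow_right hk hmem
    rw [← hA] at hfree
    obtain ⟨c, hc, hceq⟩ := hfree
    have hc2 : c = a' + ((p ^ k : ℕ) : 𝓞 K) * A.symm t := by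
      apply A.injective
      rw [hceq, map_add, hAmul, A.apply_symm_apply]
    apply hc P hP (hbot P hpP)
    rw [hc2]
    refine (P ^ k).add_mem ha' ?_
    push_cast
    exact (P ^ k).mul_mem_right _ (Ideal.pow_mem_pow hpP k)
  have hp2 : (p : 𝓞 K) ∉ Q ^ 2 := kf_unram p hp (by omega) Q hQ hpQ
  have hPQ1 : ∀ z ∈ P, A z ∈ Q := by
    intro z hz
    obtain ⟨j, rfl⟩ : ∃ j, k = j + 1 := ⟨k - 1, by omega⟩
    apply kf_descend p Q hQ (hbot Q hpQ) hpQ hp2 j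
    have := hPQ (((p ^ j : ℕ) : 𝓞 K) * z) (by
      push_cast
      rw [pow_succ]
      exact Ideal.mul_mem_mul (Ideal.pow_mem_pow hpP j) hz)
    rw [hAmul] at this
    simpa using this
  have hw' : A (x * y) * A 1 - A x * A y ∈ Q := by
    have h1 : A x - m * A 1 ∈ Q := by
      have := hPQ1 _ hxm
      rw [map_sub] at this
      have e := hAint m 1
      rw [mul_one] at e
      rwa [e] at this
    have h2 : A y - l * A 1 ∈ Q := by
      have := hPQ1 _ hyl
      rw [map_sub] at this
      have e := hAint l 1
      rw [mul_one] at e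
      rwa [e] at this
    have h3 : A (x * y) - (m * l : ℤ) * A 1 ∈ Q := by
      have h4 : x * y - ((m * l : ℤ) : 𝓞 K) ∈ P := by
        have := P.add_mem (P.mul_mem_right y hxm) (P.mul_mem_left (m : 𝓞 K) hyl)
        convert! this using 1
        push_cast
        ring
      have := hPQ1 _ h4
      rw [map_sub] at this
      have e := hAint (m * l) 1
      rw [mul_one] at e
      rwa [e] at this
    have h4 := Q.sub_mem (Q.mul_mem_right (A 1) h3)
      (Q.add_mem (Q.mul_mem_right (A y) h1) (Q.mul_mem_left (m * A 1) h2))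
    convert! h4 using 1
    push_cast
    ring
  have h1 := kf_norm_ge Q hQ p hp hpQ 1 _ (by simpa using hw') hw
  rw [pow_one, Int.abs_eq_natAbs] at h1
  omega

theorem kf_equiv_free {K : Type*} [Field K] [NumberField K] (k : ℕ) (σ : 𝓞 K ≃+* 𝓞 K) (x : 𝓞 K)
    (hx : x ∈ kfreeSet K k) : σ x ∈ kfreeSet K k := by
  intro P hP hP0 h
  apply hx (P.map σ.symm) (Ideal.map_isPrime_of_equiv σ.symm)
  · rwa [Ne, Ideal.map_eq_bot_iff_of_injective σ.symm.injective]
  · rw [← Ideal.map_pow]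
    have := Ideal.mem_map_of_mem σ.symm h
    simpa using this

/-- A ℤ-linear bijection `A` of `𝓞 K` preserves the set of `k`-free integers (`k ≥ 2`)
if and only if it is the composition of a field automorphism of `K` with multiplication
by a unit of `𝓞 K`. -/
theorem kfree_preserving_iff {K : Type*} [Field K] [NumberField K] (k : ℕ) (hk : 2 ≤ k)
    (A : 𝓞 K ≃ₗ[ℤ] 𝓞 K) :
    ⇑A '' kfreeSet K k = kfreeSet K k ↔
      ∃ (τ : K ≃+* K) (ε : (𝓞 K)ˣ),
        ∀ x : 𝓞 K, (A x : K) = ((ε : 𝓞 K) : K) * τ (x : K) := by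
  constructor
  · intro hA
    have hmul := kf_main k hk A hA
    have h1 : A 1 ≠ 0 := by simp
    have h1K : ((A 1 : 𝓞 K) : K) ≠ 0 := by
      intro h
      exact h1 (RingOfIntegers.coe_injective (by simpa using h))
    let g : 𝓞 K →+* K :=
      { toFun := fun x => (A x : K) / (A 1 : K)
        map_one' := div_self h1K
        map_zero' := by simp
        map_add' := by intro x y; simp [add_div]
        map_mul' := by
          intro x y
          have := congrArg (fun z : 𝓞 K => (z : K)) (hmul x y)
          simp only [map_mul] at this
          field_simp
          exact this }
    have hg : Function.Injective g := by
      rw [injective_iff_map_eq_zero]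
      intro x hx
      have hx' : (A x : K) / (A 1 : K) = 0 := hx
      rw [div_eq_zero_iff] at hx'
      have h2 := hx'.resolve_right h1K
      have h3 : A x = 0 := RingOfIntegers.coe_injective (by simpa using h2)
      simpa using h3
    let τ0 : K →+* K := IsFractionRing.lift hg
    have hτ0 : ∀ x : 𝓞 K, τ0 (x : K) = (A x : K) / (A 1 : K) := fun x =>
      IsFractionRing.lift_algebraMap hg x
    have hbij : Function.Bijective τ0 := 
      Algebra.IsAlgebraic.algHom_bijective (τ0.toRatAlgHom)
    let τ : K ≃+* K := RingEquiv.ofBijective τ0 hbij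
    have hτ : ∀ x : 𝓞 K, (A x : K) = (A 1 : K) * τ (x : K) := by
      intro x
      have : τ (x : K) = (A x : K) / (A 1 : K) := hτ0 x
      rw [this]
      field_simp
    have hu : IsUnit (A 1) := by
      obtain ⟨y, hy⟩ := A.surjective 1
      refine IsUnit.of_mul_eq_one (RingOfIntegers.mapRingEquiv τ y) ?_
      apply RingOfIntegers.coe_injective
      have h2 := hτ y
      rw [hy] at h2
      rw [map_mul]
      exact h2.symm
    exact ⟨τ, hu.unit, hτ⟩
  · rintro ⟨τ, ε, h⟩
    have hA : ∀ x, A x = (ε : 𝓞 K) * RingOfIntegers.mapRingEquiv τ x := by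
      intro x
      apply RingOfIntegers.coe_injective
      rw [map_mul]
      exact h x
    have hunit : ∀ (u : (𝓞 K)ˣ) (x : 𝓞 K), x ∈ kfreeSet K k → (u : 𝓞 K) * x ∈ kfreeSet K k := by
      intro u x hx P hP hP0 hmem
      exact hx P hP hP0 ((Ideal.unit_mul_mem_iff_mem _ u.isUnit).1 hmem)
    apply Set.Subset.antisymm
    · rintro _ ⟨x, hx, rfl⟩
      rw [hA]
      exact hunit _ _ (kf_equiv_free k _ x hx)
    · intro z hz
      refine ⟨(RingOfIntegers.mapRingEquiv τ).symm ((ε⁻¹ : (𝓞 K)ˣ) * z),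
        kf_equiv_free k _ _ (hunit _ _ hz), ?_⟩
      rw [hA, RingEquiv.apply_symm_apply]
      simp
end

section
/- Let K and L be number fields, let k, l ≥ 1 be integers, and let A : 𝓞_K → 𝓞_L be a ℤ-linear map such that for every prime number p the induced map 𝓞_K/p^k𝓞_K → 𝓞_L/p^l𝓞_L satisfies A(V_{K,k,p}) ⊆ V_{L,l,p} (equivalently: for every x ∈ 𝓞_K with x ∉ 𝔭^k for all primes 𝔭 ∣ p of K, one has A(x) ∉ 𝔮^l for all primes 𝔮 ∣ p of L). Then there exist a field embedding τ : K → L and an element ε ∈ 𝓞_L such that A(x) = ε·τ(x) for all x ∈ 𝓞_K. If moreover A is bijective, then τ is a field isomorphism and ε ∈ 𝓞_L^× is a unit. -/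
open NumberField

section aux
open Polynomial

theorem aux_poly_prime (f : ℤ[X]) (hf : 0 < f.natDegree) (b : ℤ) (hb : b ≠ 0) :
    ∃ p : ℕ, p.Prime ∧ ∃ n : ℤ, (p : ℤ) ∣ f.eval n ∧ ¬ (p : ℤ) ∣ b := by
  have hf0 : f ≠ 0 := by rintro rfl; simp at hf
  obtain ⟨n0, hn0⟩ : ∃ n0 : ℤ, f.eval n0 ≠ 0 := by
    by_contra! h
    exact hf0 (Polynomial.funext (by simpa using h))
  set c := f.eval n0 with hc
  have h1 : f - C c ≠ 0 := by
    intro h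
    have : f = C c := sub_eq_zero.mp h
    rw [this] at hf; simp at hf
  have h2 : f + C c ≠ 0 := by
    intro h
    have : f = C (-c) := by rw [C_neg]; exact eq_neg_of_add_eq_zero_left h
    rw [this] at hf; simp at hf
  have hinf : (Set.range (fun m : ℤ => n0 + c * b * m)).Infinite := by
    apply Set.infinite_range_of_injective
    intro x y hxy
    simpa [hn0, hb] using hxy
  obtain ⟨n, ⟨m, rfl⟩, hn⟩ := hinf.exists_notMem_finset ((f - C c) * (f + C c)).roots.toFinset
  have hne : ((f - C c) * (f + C c)) ≠ 0 := mul_ne_zero h1 h2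
  simp only [Multiset.mem_toFinset, mem_roots hne, IsRoot, eval_mul, eval_sub, eval_add, eval_C,
    mul_eq_zero, not_or] at hn
  obtain ⟨t, ht⟩ := sub_dvd_eval_sub (n0 + c * b * m) n0 f
  set v := f.eval (n0 + c * b * m) with hv
  have hvu : v = c * (1 + b * m * t) := by rw [← hc] at ht; linear_combination ht
  have hu : (1 + b * m * t).natAbs ≠ 1 := by
    intro h
    rcases Int.natAbs_eq_iff.mp h with h | h
    · exact hn.1 (by rw [hvu, h]; simp)
    · exact hn.2 (by rw [hvu, h]; simp)
  obtain ⟨p, hp, hpu⟩ := Nat.exists_prime_and_dvd hu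
  have hpu' : (p : ℤ) ∣ 1 + b * m * t := Int.natCast_dvd.mpr hpu
  refine ⟨p, hp, n0 + c * b * m, ?_, ?_⟩
  · rw [← hv, hvu]; exact hpu'.mul_left _
  · intro hpb
    have : (p : ℤ) ∣ 1 := by
      have := dvd_sub hpu' ((hpb.mul_right m).mul_right t)
      simpa using this
    exact hp.one_lt.ne' (by exact_mod_cast Int.eq_one_of_dvd_one (by positivity) this)

theorem aux_bezout (f g : ℚ[X]) (h : IsCoprime f g) :
    ∃ (U V : ℤ[X]) (D : ℤ), D ≠ 0 ∧
      U.map (algebraMap ℤ ℚ) * f + V.map (algebraMap ℤ ℚ) * g = C (D : ℚ) := by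
  obtain ⟨u, v, huv⟩ := h
  obtain ⟨a, ha, hu⟩ := IsLocalization.integerNormalization_spec (nonZeroDivisors ℤ) u
  obtain ⟨b, hb, hv⟩ := IsLocalization.integerNormalization_spec (nonZeroDivisors ℤ) v
  refine ⟨b • IsLocalization.integerNormalization (nonZeroDivisors ℤ) u,
    a • IsLocalization.integerNormalization (nonZeroDivisors ℤ) v, a * b,
    mul_ne_zero (nonZeroDivisors.ne_zero ha) (nonZeroDivisors.ne_zero hb), ?_⟩
  rw [Polynomial.map_smul, Polynomial.map_smul, hu, hv]
  have : (C (((a * b : ℤ)) : ℚ)) = C (a:ℚ) * C (b:ℚ) * (u * f + v * g) := by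
    rw [huv]; simp
  rw [this]
  simp only [← Int.cast_smul_eq_zsmul ℚ, smul_eq_C_mul, eq_intCast]
  ring

theorem aux_split (M : Type*) [Field M] [NumberField M] (β : 𝓞 M) (hβ : β ≠ 0) :
    ∃ (p : ℕ) (_ : Fact p.Prime) (φ : 𝓞 M →+* ℤ_[p]), IsUnit (φ β) := by
  let pb := Field.powerBasisOfFiniteOfSeparable ℚ M
  set g := minpoly ℚ pb.gen with hg
  have hgsep : g.Separable := Algebra.IsSeparable.isSeparable ℚ pb.gen
  obtain ⟨U, V, D, hD, hUV⟩ := aux_bezout g (derivative g) hgsep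
  set f := IsLocalization.integerNormalization (nonZeroDivisors ℤ) g with hf
  obtain ⟨e, he, hfe⟩ := IsLocalization.integerNormalization_spec (nonZeroDivisors ℤ) g
  rw [← hf] at hfe
  have he0 : e ≠ 0 := nonZeroDivisors.ne_zero he
  rw [← Int.cast_smul_eq_zsmul ℚ, smul_eq_C_mul] at hfe
  have hid : U * f + V * derivative f = C (D * e) := by
    apply Polynomial.map_injective (algebraMap ℤ ℚ) (algebraMap ℤ ℚ).injective_int
    rw [Polynomial.map_add, Polynomial.map_mul, Polynomial.map_mul, ← derivative_map, hfe]
    simp only [derivative_C_mul]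
    have : Polynomial.map (algebraMap ℤ ℚ) (C (D * e)) = C (e:ℚ) * C (D:ℚ) := by
      simp [mul_comm]
    rw [this, ← hUV]; ring
  have hdeg : 0 < f.natDegree := by
    have h1 : (f.map (algebraMap ℤ ℚ)).natDegree = f.natDegree :=
      natDegree_map_eq_of_injective (algebraMap ℤ ℚ).injective_int f
    rw [← h1, hfe, natDegree_C_mul (by exact_mod_cast he0)]
    exact minpoly.natDegree_pos (Algebra.IsIntegral.isIntegral _)
  have hN : (Algebra.norm ℤ β) ≠ 0 := Algebra.norm_ne_zero_iff.mpr hβ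
  obtain ⟨p, hp, n, hpn, hpb⟩ := aux_poly_prime f hdeg (D * e * Algebra.norm ℤ β)
    (mul_ne_zero (mul_ne_zero hD he0) hN)
  have : Fact p.Prime := ⟨hp⟩
  have hunit : ∀ z : ℤ, ¬ (p : ℤ) ∣ z → ‖(z : ℤ_[p])‖ = 1 := by
    intro z hz
    by_contra h
    exact hz ((PadicInt.norm_int_lt_one_iff_dvd z).mp (lt_of_le_of_ne (PadicInt.norm_le_one _) h))
  have hder : ¬ (p : ℤ) ∣ (derivative f).eval n := by
    intro h
    apply hpb
    have h2 := congrArg (Polynomial.eval n) hid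
    simp only [eval_add, eval_mul, eval_C] at h2
    rw [← h2]
    exact (dvd_add (hpn.mul_left _) (h.mul_left _)).mul_right _
  have ev : ∀ q : ℤ[X], q.aeval (n : ℤ_[p]) = ((q.eval n : ℤ) : ℤ_[p]) := by
    intro q
    have := Polynomial.aeval_algebraMap_apply ℤ_[p] n q
    simpa using this
  obtain ⟨z, hz, -⟩ := hensels_lemma (p := p) (F := f) (a := (n : ℤ_[p])) (by
    rw [ev, ev, hunit _ hder]
    simpa using (PadicInt.norm_int_lt_one_iff_dvd _).mpr hpn)
  have hgz : aeval (z : ℚ_[p]) g = 0 := by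
    have h1 : aeval (z : ℚ_[p]) (f.map (algebraMap ℤ ℚ)) = 0 := by
      rw [aeval_map_algebraMap]
      have := Polynomial.aeval_algebraMap_apply ℚ_[p] z f
      rw [hz, map_zero] at this
      exact this
    rw [hfe, map_mul, aeval_C] at h1
    exact (mul_eq_zero.mp h1).resolve_left (by simpa using he0)
  let Φ : M →ₐ[ℚ] ℚ_[p] := pb.lift (z : ℚ_[p]) hgz
  have hint : ∀ x : 𝓞 M, Φ (x : M) ∈ (algebraMap ℤ_[p] ℚ_[p]).range := by
    intro x
    have h1 : IsIntegral ℤ (Φ (x:M)) := x.isIntegral_coe.map (Φ.restrictScalars ℤ)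
    have h2 : IsIntegral ℤ_[p] (Φ (x:M)) := h1.tower_top
    obtain ⟨y, hy⟩ := IsIntegrallyClosed.isIntegral_iff.mp h2
    exact ⟨y, hy⟩
  have hinj : Function.Injective (algebraMap ℤ_[p] ℚ_[p]) := IsFractionRing.injective _ _
  let φ : 𝓞 M →+* ℤ_[p] :=
    (RingEquiv.ofBijective (algebraMap ℤ_[p] ℚ_[p]).rangeRestrict
      ⟨fun a b h => hinj (by simpa using congrArg Subtype.val h),
        (algebraMap ℤ_[p] ℚ_[p]).rangeRestrict_surjective⟩).symm.toRingHom.comp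
      ((Φ.toRingHom.comp (algebraMap (𝓞 M) M)).codRestrict _ hint)
  refine ⟨p, this, φ, ?_⟩
  have hdvd : β ∣ ((Algebra.norm ℤ β : ℤ) : 𝓞 M) := by
    have h1 := Ideal.absNorm_mem (Ideal.span {β})
    rw [Ideal.absNorm_span_singleton, Ideal.mem_span_singleton] at h1
    refine h1.trans ?_
    have := Int.dvd_natAbs.mpr (dvd_refl (Algebra.norm ℤ β))
    have h3 : (((Algebra.norm ℤ β).natAbs : ℤ)) ∣ (Algebra.norm ℤ β) := Int.natAbs_dvd.mpr dvd_rfl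
    have h4 := map_dvd (Int.castRingHom (𝓞 M)) h3
    simpa using h4
  have h5 := map_dvd φ hdvd
  refine isUnit_of_dvd_unit h5 ?_
  rw [map_intCast, PadicInt.isUnit_iff]
  exact hunit _ (fun h => hpb (h.mul_left _))

theorem aux_crt {R ι : Type*} [CommRing R] [Finite ι] {m : ℕ} (ψ : ι → R →+* ZMod m)
    (h : ∀ i j, i ≠ j → ∃ x, IsUnit (ψ i x - ψ j x)) (c : ι → ZMod m) :
    ∃ x, ∀ i, ψ i x = c i := by
  have hcop : Pairwise (Function.onFun IsCoprime (fun i => RingHom.ker (ψ i))) := by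
    intro i j hij
    obtain ⟨x, hx⟩ := h i j hij
    obtain ⟨a, ha⟩ := ZMod.intCast_surjective (ψ i x)
    obtain ⟨b, hb⟩ := ZMod.intCast_surjective (ψ j x)
    obtain ⟨u, hu⟩ := hx.exists_left_inv
    obtain ⟨w, hw⟩ := ZMod.intCast_surjective u
    -- `w (a - b) - 1` lies in the kernel
    rw [Function.onFun, Ideal.isCoprime_iff_exists]
    have h1 : (w : R) * ((x : R) - b) + (1 - w * (a - b)) ∈ RingHom.ker (ψ j) := by
      rw [RingHom.mem_ker]
      simp only [map_add, map_mul, map_sub, map_one, map_intCast, ha, hb, hw]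
      rw [hu]; ring
    refine ⟨w * (a - x), ?_, _, h1, by ring⟩
    rw [RingHom.mem_ker]
    simp [ha]
  choose d hd using fun i => ZMod.intCast_surjective (c i)
  obtain ⟨x, hx⟩ := Ideal.pi_quotient_surjective hcop (fun i => Ideal.Quotient.mk _ (d i : R))
  refine ⟨x, fun i => ?_⟩
  have := hx i
  rw [Ideal.Quotient.eq, RingHom.mem_ker, map_sub, sub_eq_zero] at this
  rw [this, map_intCast, hd]

theorem aux_ker_pow {L : Type*} [Field L] [NumberField L] (p l : ℕ) (hp : p.Prime) (hl : 1 ≤ l)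
    (g : 𝓞 L →+* ZMod (p ^ l)) :
    ∃ Q : Ideal (𝓞 L), Q.IsPrime ∧ (p : 𝓞 L) ∈ Q ∧ ∀ x, g x = 0 → x ∈ Q ^ l := by
  have : Fact p.Prime := ⟨hp⟩
  have hsurj : ∀ (m : ℕ) (g : 𝓞 L →+* ZMod m), Function.Surjective g := by
    intro m g y
    obtain ⟨a, rfl⟩ := ZMod.intCast_surjective y
    exact ⟨a, map_intCast g a⟩
  have hnorm : ∀ (m : ℕ) (g : 𝓞 L →+* ZMod m), Ideal.absNorm (RingHom.ker g) = m := by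
    intro m g
    rw [Ideal.absNorm_apply, Submodule.cardQuot_apply]
    have e := RingHom.quotientKerEquivOfSurjective (hsurj m g)
    have := Nat.card_congr e.toEquiv
    rw [Nat.card_zmod] at this
    exact this
  let r : ZMod (p ^ l) →+* ZMod p := ZMod.castHom (dvd_pow_self p (by omega)) (ZMod p)
  let g1 : 𝓞 L →+* ZMod p := r.comp g
  refine ⟨RingHom.ker g1, RingHom.ker_isPrime g1, ?_, ?_⟩
  · rw [RingHom.mem_ker, map_natCast]; simp
  have hle : RingHom.ker g1 ^ l ≤ RingHom.ker g := by
    have h1 : ∀ y ∈ RingHom.ker g1, g y ∈ Ideal.span {(p : ZMod (p ^ l))} := by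
      intro y hy
      have hy' : r (g y) = 0 := hy
      obtain ⟨a, ha⟩ := ZMod.intCast_surjective (g y)
      rw [← ha, map_intCast, ZMod.intCast_zmod_eq_zero_iff_dvd] at hy'
      obtain ⟨t, rfl⟩ := hy'
      rw [← ha, Ideal.mem_span_singleton]
      exact ⟨t, by push_cast; rfl⟩
    have h2 : RingHom.ker g1 ≤ (Ideal.span {(p : ZMod (p ^ l))}).comap g := h1
    have h3 := (Ideal.pow_right_mono h2 l).trans (Ideal.le_comap_pow g l)
    refine h3.trans ?_
    rw [Ideal.span_singleton_pow]
    have : ((p : ZMod (p ^ l)) ^ l) = 0 := by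
      rw [← Nat.cast_pow, ZMod.natCast_self]
    rw [this]
    intro x hx
    simpa using hx
  obtain ⟨C, hC⟩ := Ideal.dvd_iff_le.mpr hle
  have hCn : Ideal.absNorm C = 1 := by
    have := congrArg Ideal.absNorm hC
    rw [map_mul, map_pow, hnorm, hnorm] at this
    have hpos : 0 < p ^ l := pow_pos hp.pos l
    exact Nat.eq_of_mul_eq_mul_left hpos (by omega)
  rw [Ideal.absNorm_eq_one_iff] at hCn
  rw [hCn, Ideal.mul_top] at hC
  intro x hx
  rw [hC]; exact hx

theorem aux_two_units {R : Type*} [CommRing R] [IsLocalRing R] (h2 : IsUnit (2 : R)) (c : R) :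
    ∃ y z : R, IsUnit y ∧ IsUnit z ∧ y + z + c = 0 := by
  have : IsUnit ((1 - c) + (1 + c)) := by convert h2 using 1; ring
  rcases IsLocalRing.isUnit_or_isUnit_of_isUnit_add this with h | h
  · exact ⟨-1, 1 - c + 0, isUnit_one.neg, by simpa using h, by ring⟩
  · exact ⟨1, -(1 + c), isUnit_one, h.neg, by ring⟩

theorem aux_field.{u, v} (K : Type u) [Field K] [NumberField K]
    (L : Type v) [Field L] [NumberField L] :
    ∃ (M : Type v) (_ : Field M) (_ : NumberField M) (_ : L →+* M),
      Fintype.card (K →ₐ[ℚ] M) = Module.finrank ℚ K := by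
  let pb := Field.powerBasisOfFiniteOfSeparable ℚ K
  let q : L[X] := (minpoly ℚ pb.gen).map (algebraMap ℚ L)
  let M := q.SplittingField
  have : CharZero M := charZero_of_injective_algebraMap (algebraMap L M).injective
  have hM : NumberField M := by
    have : FiniteDimensional ℚ M := FiniteDimensional.trans ℚ L M
    exact { }
  refine ⟨M, inferInstance, hM, algebraMap L M, ?_⟩
  rw [Fintype.card_eq_nat_card, AlgHom.natCard_of_powerBasis (L := M) pb
    (Algebra.IsSeparable.isSeparable _ _) ?_, PowerBasis.finrank pb]
  have := SplittingField.splits q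
  rw [Polynomial.map_map] at this
  have e : (algebraMap L q.SplittingField).comp (algebraMap ℚ L) = algebraMap ℚ M :=
    RingHom.ext_rat _ _
  rw [e] at this
  exact this

theorem aux_norm {K M : Type*} [Field K] [NumberField K] [Field M] [NumberField M]
    (hcard : Fintype.card (K →ₐ[ℚ] M) = Module.finrank ℚ K) (x : K) :
    algebraMap ℚ M (Algebra.norm ℚ x) = ∏ σ : K →ₐ[ℚ] M, σ x := by
  let E := AlgebraicClosure M
  let j : M →ₐ[ℚ] E := IsScalarTower.toAlgHom ℚ M E
  apply (show Function.Injective j from j.toRingHom.injective)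
  rw [AlgHom.commutes, Algebra.norm_eq_prod_embeddings ℚ E x, map_prod]
  symm
  have hinj : Function.Injective (fun σ : K →ₐ[ℚ] M => j.comp σ) := by
    intro σ τ h
    ext y
    exact j.toRingHom.injective (DFunLike.congr_fun h y)
  refine Fintype.prod_bijective (fun σ : K →ₐ[ℚ] M => j.comp σ) ?_ _ _ (fun σ => rfl)
  rw [Fintype.bijective_iff_injective_and_card]
  exact ⟨hinj, by rw [hcard, AlgHom.card]⟩

theorem aux_expand {K M : Type*} [Field K] [NumberField K] [Field M] [NumberField M]
    (hcard : Fintype.card (K →ₐ[ℚ] M) = Module.finrank ℚ K) (A : 𝓞 K →ₗ[ℤ] M) :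
    ∃ ε : (K →ₐ[ℚ] M) → M, ∀ x : 𝓞 K, A x = ∑ σ, ε σ * σ (x : K) := by
  let B : K →ₗ[ℚ] M := (integralBasis K).constr ℚ (fun i => A (RingOfIntegers.basis K i))
  have hB : ∀ x : 𝓞 K, B (x : K) = A x := by
    intro x
    have : (B.restrictScalars ℤ).comp (Algebra.linearMap (𝓞 K) K |>.restrictScalars ℤ) = A := by
      apply (RingOfIntegers.basis K).ext
      intro i
      simp only [LinearMap.comp_apply, LinearMap.restrictScalars_apply, Algebra.linearMap_apply]
      rw [← integralBasis_apply, Module.Basis.constr_basis]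
    exact DFunLike.congr_fun this x
  have hli := linearIndependent_toLinearMap ℚ K M
  have hspan := hli.span_eq_top_of_card_eq_finrank' (by
    rw [hcard, Module.finrank_linearMap_self])
  have hmem : B ∈ Submodule.span M (Set.range (AlgHom.toLinearMap : (K →ₐ[ℚ] M) → K →ₗ[ℚ] M)) := by
    rw [hspan]; trivial
  obtain ⟨ε, hε⟩ := (Submodule.mem_span_range_iff_exists_fun M).mp hmem
  refine ⟨ε, fun x => ?_⟩
  rw [← hB, ← hε]
  simp [LinearMap.sum_apply]

theorem aux_factor {K L M : Type*} [Field K] [NumberField K] [Field L] [Field M]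
    (i : L →+* M) (σ : K →+* M) (h : ∀ x : 𝓞 K, ∃ y : L, i y = σ (x : K)) :
    ∃ τ : K →+* L, ∀ x, i (τ x) = σ x := by
  have h' : ∀ x, σ x ∈ i.range := by
    intro x
    obtain ⟨a, b, hb, rfl⟩ := IsFractionRing.div_surjective (A := 𝓞 K) x
    obtain ⟨u, hu⟩ := h a
    obtain ⟨v, hv⟩ := h b
    exact ⟨u / v, by rw [map_div₀, map_div₀, hu, hv]⟩
  let e := RingEquiv.ofBijective i.rangeRestrict
    ⟨fun a b h => i.injective (by simpa using congrArg Subtype.val h), i.rangeRestrict_surjective⟩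
  refine ⟨e.symm.toRingHom.comp (σ.codRestrict _ h'), fun x => ?_⟩
  have := e.apply_symm_apply (σ.codRestrict _ h' x)
  exact congrArg Subtype.val this

theorem aux_bij {K L : Type*} [Field K] [NumberField K]
    [Field L] [NumberField L] (A : 𝓞 K → 𝓞 L) (τ : K →+* L) (ε : 𝓞 L)
    (h : ∀ x : 𝓞 K, (A x : L) = (ε : L) * τ (x : K)) (hA : Function.Surjective A) :
      ∃ (τ : K ≃+* L) (ε : (𝓞 L)ˣ),
        ∀ x : 𝓞 K, (A x : L) = ((ε : 𝓞 L) : L) * τ (x : K) := by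
  have h' : ∀ x, A x = ε * RingOfIntegers.mapRingHom τ x := by
    intro x
    apply RingOfIntegers.ext
    rw [h]; rfl
  have hu : IsUnit ε := by
    obtain ⟨x, hx⟩ := hA 1
    exact IsUnit.of_mul_eq_one _ ((h' x).symm.trans hx)
  have hs : ∀ y : 𝓞 L, ∃ x : 𝓞 K, τ x = y := by
    intro y
    obtain ⟨x, hx⟩ := hA (ε * y)
    rw [h'] at hx
    refine ⟨x, ?_⟩
    have := hu.mul_left_cancel hx
    rw [← this, RingOfIntegers.mapRingHom_apply]
  have hsurj : Function.Surjective τ := by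
    intro y
    obtain ⟨a, b, hb, rfl⟩ := IsFractionRing.div_surjective (A := 𝓞 L) y
    obtain ⟨u, hu⟩ := hs a
    obtain ⟨v, hv⟩ := hs b
    exact ⟨u / v, by rw [map_div₀, hu, hv]⟩
  exact ⟨RingEquiv.ofBijective τ ⟨τ.injective, hsurj⟩, hu.unit, fun x => h x⟩

theorem aux_not_mem {K M : Type*} [Field K] [NumberField K] [Field M] [NumberField M]
    (hcard : Fintype.card (K →ₐ[ℚ] M) = Module.finrank ℚ K) (p l : ℕ) (hp : p.Prime) (hl : 1 ≤ l)
    (φ : 𝓞 M →+* ZMod (p ^ l)) (x : 𝓞 K)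
    (hx : ∀ σ : K →ₐ[ℚ] M, IsUnit (φ (RingOfIntegers.mapRingHom σ.toRingHom x)))
    (P : Ideal (𝓞 K)) (hP : P.IsPrime) (hpP : (p : 𝓞 K) ∈ P) : x ∉ P := by
  intro hxP
  have h1 : ((Algebra.norm ℤ x : ℤ) : 𝓞 M) =
      ∏ σ : K →ₐ[ℚ] M, RingOfIntegers.mapRingHom σ.toRingHom x := by
    apply RingOfIntegers.ext
    have h2 := aux_norm hcard (x : K)
    rw [← Algebra.coe_norm_int] at h2
    have h3 : algebraMap (𝓞 M) M (∏ σ : K →ₐ[ℚ] M, RingOfIntegers.mapRingHom σ.toRingHom x)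
      = ∏ σ : K →ₐ[ℚ] M, σ (x : K) := by
      rw [map_prod]; rfl
    change algebraMap (𝓞 M) M _ = algebraMap (𝓞 M) M _
    rw [h3, ← h2]
    simp
  have h4 : IsUnit (((Algebra.norm ℤ x : ℤ)) : ZMod (p ^ l)) := by
    have := congrArg φ h1
    rw [map_intCast, map_prod] at this
    rw [this]
    exact IsUnit.prod_univ_iff.mpr hx
  have hNP : ((Algebra.norm ℤ x : ℤ) : 𝓞 K) ∈ P := by
    have h1 := Ideal.absNorm_mem (Ideal.span {x})
    rw [Ideal.absNorm_span_singleton] at h1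
    have h2 : (((Algebra.norm ℤ x).natAbs : ℕ) : 𝓞 K) ∈ P :=
      (Ideal.span_singleton_le_iff_mem P).mpr hxP h1
    have h3 : (((Algebra.norm ℤ x).natAbs : ℤ)) ∣ (Algebra.norm ℤ x) := Int.natAbs_dvd.mpr dvd_rfl
    have h4 := map_dvd (Int.castRingHom (𝓞 K)) h3
    exact Ideal.mem_of_dvd P (by simpa using h4) h2
  have hcop : ¬ (p : ℤ) ∣ Algebra.norm ℤ x := by
    rintro ⟨t, ht⟩
    have : Fact p.Prime := ⟨hp⟩
    have h5 := h4.map (ZMod.castHom (dvd_pow_self p (by omega)) (ZMod p))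
    rw [map_intCast, ht] at h5
    simp at h5
  have : IsCoprime (p : ℤ) (Algebra.norm ℤ x) :=
    (Nat.prime_iff_prime_int.mp hp).coprime_iff_not_dvd.mpr hcop
  obtain ⟨a, b, hab⟩ := this
  apply hP.ne_top
  rw [Ideal.eq_top_iff_one]
  have h6 := congrArg (Int.cast : ℤ → 𝓞 K) hab
  push_cast at h6
  rw [← h6]
  exact P.add_mem (P.mul_mem_left _ hpP) (P.mul_mem_left _ hNP)

theorem aux_key {K L M : Type*} [Field K] [NumberField K]
    [Field L] [NumberField L] [Field M] [NumberField M] (k l : ℕ) (hk : 1 ≤ k) (hl : 1 ≤ l)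
    (A : 𝓞 K →ₗ[ℤ] 𝓞 L)
    (hA : ∀ p : ℕ, p.Prime → ∀ x : 𝓞 K,
      (∀ P : Ideal (𝓞 K), P.IsPrime → (p : 𝓞 K) ∈ P → x ∉ P ^ k) →
      ∀ Q : Ideal (𝓞 L), Q.IsPrime → (p : 𝓞 L) ∈ Q → A x ∉ Q ^ l)
    (hcard : Fintype.card (K →ₐ[ℚ] M) = Module.finrank ℚ K) (i : L →+* M)
    (ε : (K →ₐ[ℚ] M) → M) (hε : ∀ x : 𝓞 K, i (A x : L) = ∑ σ, ε σ * σ (x : K))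
    (σ₁ σ₂ : K →ₐ[ℚ] M) (h12 : σ₁ ≠ σ₂) (h1 : ε σ₁ ≠ 0) (h2 : ε σ₂ ≠ 0) : False := by
  classical
  obtain ⟨b, hb⟩ := IsLocalization.exist_integer_multiples_of_finite (nonZeroDivisors (𝓞 M)) ε
  choose α hα using hb
  have hb0 : (b : 𝓞 M) ≠ 0 := nonZeroDivisors.ne_zero b.2
  have hb0' : algebraMap (𝓞 M) M b ≠ 0 := by
    simpa using hb0
  have hα0 : ∀ σ, ε σ ≠ 0 → α σ ≠ 0 := by
    intro σ h h0
    have := hα σ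
    rw [h0, map_zero, Algebra.smul_def] at this
    exact (mul_ne_zero hb0' h) this.symm
  let s : (K →ₐ[ℚ] M) → 𝓞 K →+* 𝓞 M := fun σ => RingOfIntegers.mapRingHom σ.toRingHom
  have hs : ∀ σ τ : K →ₐ[ℚ] M, σ ≠ τ → ∃ x, s σ x ≠ s τ x := by
    intro σ τ hne
    by_contra! h
    apply hne
    have h' : ∀ x : 𝓞 K, σ (x : K) = τ (x : K) := fun x => congrArg (algebraMap (𝓞 M) M) (h x)
    ext y
    obtain ⟨a, b, hb, rfl⟩ := IsFractionRing.div_surjective (A := 𝓞 K) y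
    rw [map_div₀, map_div₀, h', h']
  choose! X hX using hs
  let δ : (K →ₐ[ℚ] M) × (K →ₐ[ℚ] M) → 𝓞 M := fun q =>
    if q.1 = q.2 then 1 else s q.1 (X q.1 q.2) - s q.2 (X q.1 q.2)
  have hδ : ∏ q, δ q ≠ 0 := by
    rw [Finset.prod_ne_zero_iff]
    intro q _
    by_cases hq : q.1 = q.2
    · simp [δ, hq]
    · simp only [δ, hq, if_false]
      exact sub_ne_zero.mpr (hX _ _ hq)
  obtain ⟨p, hp, φ0, hφ0⟩ := aux_split M (2 * b * α σ₁ * α σ₂ * ∏ q, δ q)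
    (mul_ne_zero (mul_ne_zero (mul_ne_zero (mul_ne_zero two_ne_zero hb0) (hα0 _ h1))
      (hα0 _ h2)) hδ)
  let φ : 𝓞 M →+* ZMod (p ^ l) := (PadicInt.toZModPow l).comp φ0
  have hφ : IsUnit (φ (2 * b * α σ₁ * α σ₂ * ∏ q, δ q)) := hφ0.map (PadicInt.toZModPow l)
  simp only [map_mul, map_prod, map_ofNat, IsUnit.mul_iff, IsUnit.prod_univ_iff] at hφ
  obtain ⟨⟨⟨⟨hu2, hub⟩, hu₁⟩, hu₂⟩, huδ⟩ := hφ
  have : Nontrivial (ZMod (p ^ l)) := by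
    have : Fact (1 < p ^ l) := ⟨Nat.one_lt_pow (by omega) hp.out.one_lt⟩
    infer_instance
  have : IsLocalRing (ZMod (p ^ l)) :=
    IsLocalRing.of_surjective' (PadicInt.toZModPow l) (by
      intro y
      obtain ⟨a, rfl⟩ := ZMod.intCast_surjective y
      exact ⟨a, map_intCast _ a⟩)
  obtain ⟨y, z, hy, hz, hyz⟩ := aux_two_units hu2
    (∑ σ ∈ (Finset.univ.erase σ₁).erase σ₂, φ (α σ))
  obtain ⟨v₁, hv₁⟩ := hu₁
  obtain ⟨v₂, hv₂⟩ := hu₂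
  let c : (K →ₐ[ℚ] M) → ZMod (p ^ l) := fun σ =>
    if σ = σ₁ then (↑v₁⁻¹ : ZMod (p ^ l)) * y else if σ = σ₂ then (↑v₂⁻¹ : ZMod (p ^ l)) * z else 1
  have hc : ∀ σ, IsUnit (c σ) := by
    intro σ
    simp only [c]
    split_ifs
    · exact v₁⁻¹.isUnit.mul hy
    · exact v₂⁻¹.isUnit.mul hz
    · exact isUnit_one
  obtain ⟨x, hx⟩ := aux_crt (fun σ => φ.comp (s σ)) (by
    intro σ τ hne
    refine ⟨X σ τ, ?_⟩
    have := huδ (σ, τ)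
    simp only [δ, hne, if_false, map_sub] at this
    exact this) c
  have hsum : ∑ σ, φ (α σ) * c σ = 0 := by
    rw [← Finset.add_sum_erase _ _ (Finset.mem_univ σ₁),
      ← Finset.add_sum_erase _ _ (Finset.mem_erase.mpr ⟨h12.symm, Finset.mem_univ σ₂⟩)]
    have hrest : ∑ σ ∈ (Finset.univ.erase σ₁).erase σ₂, φ (α σ) * c σ =
        ∑ σ ∈ (Finset.univ.erase σ₁).erase σ₂, φ (α σ) := by
      apply Finset.sum_congr rfl
      intro σ hσ
      simp only [Finset.mem_erase] at hσ
      simp [c, hσ.1, hσ.2.1]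
    rw [hrest]
    have e1 : c σ₁ = (↑v₁⁻¹ : ZMod (p ^ l)) * y := by simp [c]
    have e2 : c σ₂ = (↑v₂⁻¹ : ZMod (p ^ l)) * z := by simp [c, h12.symm]
    rw [e1, e2, ← hv₁, ← hv₂, Units.mul_inv_cancel_left, Units.mul_inv_cancel_left, ← add_assoc]
    exact hyz
  have hbA : (b : 𝓞 M) * RingOfIntegers.mapRingHom i (A x) = ∑ σ, α σ * s σ x := by
    apply RingOfIntegers.ext
    change algebraMap (𝓞 M) M _ = algebraMap (𝓞 M) M _
    rw [map_mul, map_sum]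
    have : algebraMap (𝓞 M) M (RingOfIntegers.mapRingHom i (A x)) = i (A x : L) := rfl
    rw [this, hε, Finset.mul_sum]
    apply Finset.sum_congr rfl
    intro σ _
    rw [map_mul, hα, Algebra.smul_def, mul_assoc]
    rfl
  have hgA : (φ.comp (RingOfIntegers.mapRingHom i)) (A x) = 0 := by
    have h := congrArg φ hbA
    rw [map_mul, map_sum] at h
    have h' : ∑ σ, φ (α σ * s σ x) = 0 := by
      rw [← hsum]
      apply Finset.sum_congr rfl
      intro σ _
      rw [map_mul, ← hx σ]; rfl
    rw [h'] at h
    exact (hub.mul_right_eq_zero).mp h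
  obtain ⟨Q, hQ, hpQ, hQl⟩ := aux_ker_pow p l hp.out hl (φ.comp (RingOfIntegers.mapRingHom i))
  refine hA p hp.out x ?_ Q hQ hpQ (hQl _ hgA)
  intro P hP hpP hxP
  refine aux_not_mem hcard p l hp.out hl φ x (fun σ => ?_) P hP hpP
    (Ideal.pow_le_self (by omega) hxP)
  have := hc σ
  rw [← hx σ] at this
  exact this

end aux

/-- A ℤ-linear map `A : 𝓞 K → 𝓞 L` between rings of integers of number fields that,
for every prime number `p`, maps locally `k`-free elements at `p` to locally `l`-free
elements at `p`, is of the form `x ↦ ε·τ(x)` for a field embedding `τ : K → L` and some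
`ε ∈ 𝓞 L`; if moreover `A` is bijective, `τ` can be taken to be a field isomorphism and
`ε` a unit. -/
theorem linear_map_local_kfree {K L : Type*} [Field K] [NumberField K]
    [Field L] [NumberField L] (k l : ℕ) (hk : 1 ≤ k) (hl : 1 ≤ l)
    (A : 𝓞 K →ₗ[ℤ] 𝓞 L)
    (hA : ∀ p : ℕ, p.Prime → ∀ x : 𝓞 K,
      (∀ P : Ideal (𝓞 K), P.IsPrime → (p : 𝓞 K) ∈ P → x ∉ P ^ k) →
      ∀ Q : Ideal (𝓞 L), Q.IsPrime → (p : 𝓞 L) ∈ Q → A x ∉ Q ^ l) :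
    (∃ (τ : K →+* L) (ε : 𝓞 L),
        ∀ x : 𝓞 K, (A x : L) = (ε : L) * τ (x : K)) ∧
    (Function.Bijective A →
      ∃ (τ : K ≃+* L) (ε : (𝓞 L)ˣ),
        ∀ x : 𝓞 K, (A x : L) = ((ε : 𝓞 L) : L) * τ (x : K)) := by
  have main : ∃ (τ : K →+* L) (ε : 𝓞 L),
        ∀ x : 𝓞 K, (A x : L) = (ε : L) * τ (x : K) := by
    obtain ⟨M, _, _, i, hcard⟩ := aux_field K L
    let j : 𝓞 L →ₗ[ℤ] M := (i.comp (algebraMap (𝓞 L) L)).toAddMonoidHom.toIntLinearMap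
    obtain ⟨ε, hε⟩ := aux_expand hcard (j.comp A)
    have hε' : ∀ x : 𝓞 K, i (A x : L) = ∑ σ, ε σ * σ (x : K) := hε
    have hA1 : A 1 ≠ 0 := by
      intro h0
      obtain ⟨p, hp, φ, -⟩ := aux_split L 1 one_ne_zero
      obtain ⟨Q, hQ, hpQ, -⟩ := aux_ker_pow p l hp.out hl ((PadicInt.toZModPow l).comp φ)
      refine hA p hp.out 1 ?_ Q hQ hpQ (by rw [h0]; exact Ideal.zero_mem _)
      intro P hP _ h1
      exact hP.ne_top ((Ideal.eq_top_iff_one P).mpr (Ideal.pow_le_self (by omega) h1))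
    have hA1' : i (A 1 : L) ≠ 0 := by
      simpa using hA1
    obtain ⟨σ₀, hσ₀⟩ : ∃ σ, ε σ ≠ 0 := by
      by_contra! h
      apply hA1'
      rw [hε']
      simp [h]
    have hone : ∀ x : 𝓞 K, i (A x : L) = ε σ₀ * σ₀ (x : K) := by
      intro x
      rw [hε']
      refine Finset.sum_eq_single σ₀ (fun σ _ hne => ?_) (fun h => absurd (Finset.mem_univ _) h)
      by_contra h
      exact aux_key k l hk hl A hA hcard i ε hε' σ σ₀ hne (left_ne_zero_of_mul h) hσ₀
    have hε1 : ε σ₀ = i (A 1 : L) := by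
      rw [hone]; simp
    obtain ⟨τ, hτ⟩ := aux_factor i σ₀.toRingHom (by
      intro x
      refine ⟨(A x : L) / (A 1 : L), ?_⟩
      rw [map_div₀, div_eq_iff hA1', hone x, hε1, mul_comm]
      rfl)
    refine ⟨τ, A 1, fun x => i.injective ?_⟩
    rw [map_mul, hτ, hone, hε1]
    rfl
  refine ⟨main, fun hbij => ?_⟩
  obtain ⟨τ, ε, h⟩ := main
  exact aux_bij A τ ε h hbij.2
end

section
/- Let K and L be number fields, let k ≥ 2 and l ≥ 1 be integers, and let A : 𝓞_K → 𝓞_L be a ℤ-linear map with A(V_{K,k}) ⊆ V_{L,l}. Then there exist a field embedding τ : K → L and an element ε ∈ 𝓞_L such that A(x) = ε·τ(x) for all x ∈ 𝓞_K. -/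
open NumberField

lemma kf_coprime_mem {R : Type*} [CommRing R] (I : Ideal R) (m M : ℤ) (x : R)
    (hM : (M : R) ∈ I) (hc : IsCoprime m M) (h : (m : R) * x ∈ I) : x ∈ I := by
  obtain ⟨a, b, hab⟩ := hc
  have h1 : x = (a : R) * ((m : R) * x) + (b * x : R) * (M : R) := by
    have : ((a * m + b * M : ℤ) : R) = 1 := by rw [hab]; simp
    push_cast at this
    linear_combination (-x) * this
  rw [h1]
  exact I.add_mem (I.mul_mem_left _ h) (I.mul_mem_left _ hM)

lemma kf_int_mem {R : Type*} [CommRing R] (P : Ideal R) (hP : P.IsPrime) (p : ℕ) (hp : p.Prime)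
    (hpP : (p : R) ∈ P) (m : ℤ) (hm : (m : R) ∈ P) : (p : ℤ) ∣ m := by
  by_contra h
  have hc : IsCoprime m (p : ℤ) := by
    rw [isCoprime_comm]
    exact (Nat.prime_iff_prime_int.mp hp).coprime_iff_not_dvd.mpr h
  apply hP.ne_top
  rw [Ideal.eq_top_iff_one]
  exact kf_coprime_mem P m p 1 (by simpa using hpP) hc (by simpa using hm)

lemma kf_below {K : Type*} [Field K] [NumberField K] (P : Ideal (𝓞 K)) (hP : P.IsPrime)
    (h0 : P ≠ ⊥) : ∃ p : ℕ, p.Prime ∧ (p : 𝓞 K) ∈ P := by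
  have : NeZero P := ⟨h0⟩
  refine ⟨_, Nat.absNorm_under_prime P, ?_⟩
  have := Ideal.absNorm_mem (P.under ℤ)
  simpa [Ideal.under, Ideal.mem_comap] using this

lemma kf_primes {K : Type*} [Field K] [NumberField K] (p : ℕ) (hp : p.Prime) :
    ∃ s : Finset (Ideal (𝓞 K)), s.card ≤ Module.finrank ℚ K ∧
      ∀ P : Ideal (𝓞 K), P.IsPrime → (p : 𝓞 K) ∈ P → P ∈ s := by
  have hpz := Nat.prime_iff_prime_int.mp hp
  have hb : Ideal.span {(p : ℤ)} ≠ ⊥ := by simp [hp.ne_zero]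
  have hpr : (Ideal.span {(p : ℤ)}).IsPrime := (Ideal.span_singleton_prime hpz.ne_zero).mpr hpz
  have hmax : (Ideal.span {(p : ℤ)}).IsMaximal := hpr.isMaximal hb
  refine ⟨IsDedekindDomain.primesOverFinset (Ideal.span {(p : ℤ)}) (𝓞 K), ?_, ?_⟩
  · exact Ideal.card_primesOverFinset_le_finrank (𝓞 K) ℚ K hb
  · intro P hP hpP
    rw [IsDedekindDomain.mem_primesOverFinset_iff hb]
    refine ⟨hP, ⟨?_⟩⟩
    refine hmax.eq_of_le (hP.comap _).ne_top ?_
    rw [Ideal.span_singleton_le_iff_mem, Ideal.mem_comap]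
    simpa using hpP

lemma kf_count {ι : Type*} [Fintype ι] [DecidableEq ι] (T m : ℕ) (hm : 1 ≤ m)
    (S : Finset (ι → ℕ)) (hS : ∀ t ∈ S, ∀ i, t i < T)
    (hd : ∀ t ∈ S, ∀ t' ∈ S, (∀ i, |(t i : ℤ) - t' i| ≤ (m - 1 : ℕ)) → t = t') :
    S.card ≤ (T / m + 1) ^ Fintype.card ι := by
  have h : S.card ≤ (Fintype.piFinset (fun _ : ι => Finset.range (T / m + 1))).card := by
    apply Finset.card_le_card_of_injOn (fun t i => t i / m)
    · intro t ht
      simp only [Finset.mem_coe, Fintype.mem_piFinset, Finset.mem_range]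
      intro i
      exact Nat.lt_succ_of_le (Nat.div_le_div_right (hS t ht i).le)
    · intro t ht t' ht' h
      apply hd t ht t' ht'
      intro i
      have h1 := congrFun h i
      simp only at h1
      have e1 := Nat.div_add_mod (t i) m
      have e2 := Nat.div_add_mod (t' i) m
      have l1 := Nat.mod_lt (t i) hm
      have l2 := Nat.mod_lt (t' i) hm
      rw [h1] at e1
      rw [abs_le]
      constructor <;> push_cast [Nat.cast_sub hm] <;> omega
  simpa using h

lemma kf_arith (n C T m p : ℕ) (hp : 1 ≤ p) (hm : 1 ≤ m) (h : p ^ 2 ≤ C * m ^ n) :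
    (((T / m + 1) ^ n : ℕ) : ℝ) ≤ 2 ^ n * (C * T ^ n * ((p : ℝ) ^ 2)⁻¹ + 1) := by
  have hp' : (0 : ℝ) < (p : ℝ) ^ 2 := by positivity
  rcases lt_or_ge T m with hT | hT
  · rw [Nat.div_eq_of_lt hT]
    simp only [zero_add, one_pow, Nat.cast_one]
    have : (1 : ℝ) ≤ 2 ^ n := one_le_pow₀ (by norm_num)
    have h2 : (0 : ℝ) ≤ C * T ^ n * ((p : ℝ) ^ 2)⁻¹ := by positivity
    nlinarith
  · have h1 : 1 ≤ T / m := (Nat.one_le_div_iff hm).mpr hT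
    have h2 : ((T / m + 1 : ℕ) : ℝ) ≤ 2 * ((T : ℝ) / m) := by
      have := @Nat.cast_div_le ℝ _ _ _ T m
      have h1' : (1 : ℝ) ≤ ((T / m : ℕ) : ℝ) := by exact_mod_cast h1
      push_cast at *
      linarith
    have hm' : (0 : ℝ) < (m : ℝ) ^ n := by positivity
    have h3 : ((p : ℝ) ^ 2) ≤ C * (m : ℝ) ^ n := by exact_mod_cast h
    calc (((T / m + 1) ^ n : ℕ) : ℝ) = ((T / m + 1 : ℕ) : ℝ) ^ n := by push_cast; rfl
      _ ≤ (2 * ((T : ℝ) / m)) ^ n := by gcongr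
      _ = 2 ^ n * (T ^ n / m ^ n) := by rw [mul_pow, div_pow]
      _ ≤ 2 ^ n * (C * T ^ n * ((p : ℝ) ^ 2)⁻¹) := by
        gcongr
        rw [← div_eq_mul_inv, div_le_div_iff₀ hm' hp']
        have : (0 : ℝ) ≤ (T : ℝ) ^ n := by positivity
        nlinarith
      _ ≤ _ := by gcongr; linarith

lemma kf_choose_m (n C p : ℕ) (hn : 1 ≤ n) (hC : 1 ≤ C) (hp : 1 ≤ p) :
    ∃ m, 1 ≤ m ∧ p ^ 2 ≤ C * m ^ n ∧ C * (m - 1) ^ n < p ^ 2 := by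
  have hex : ∃ m, p ^ 2 ≤ C * m ^ n :=
    ⟨p ^ 2, (Nat.le_self_pow (by omega) _).trans (Nat.le_mul_of_pos_left _ hC)⟩
  classical
  refine ⟨Nat.find hex, ?_, Nat.find_spec hex, ?_⟩
  · by_contra h
    have h0 : Nat.find hex = 0 := by omega
    have := Nat.find_spec hex
    rw [h0, zero_pow (by omega)] at this
    have : 0 < p ^ 2 := by positivity
    omega
  · have h1 : 1 ≤ Nat.find hex := by
      by_contra h
      have h0 : Nat.find hex = 0 := by omega
      have := Nat.find_spec hex
      rw [h0, zero_pow (by omega)] at this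
      have : 0 < p ^ 2 := by positivity
      omega
    exact not_le.mp (Nat.find_min hex (by omega))

/-- norm lower bound for elements of squares of primes -/
lemma kf_norm_lb {K : Type*} [Field K] [NumberField K] (P : Ideal (𝓞 K)) (hP : P.IsPrime)
    (p : ℕ) (hp : p.Prime) (hpP : (p : 𝓞 K) ∈ P) (x : 𝓞 K) (hx : x ≠ 0) (hxP : x ∈ P ^ 2) :
    (p : ℤ) ^ 2 ≤ |Algebra.norm ℤ x| := by
  have h1 := Ideal.absNorm_dvd_norm_of_mem hxP
  have h2 : (p : ℤ) ∣ (Ideal.absNorm P : ℤ) :=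
    kf_int_mem P hP p hp hpP _ (by simpa using Ideal.absNorm_mem P)
  rw [map_pow, Nat.cast_pow] at h1
  have h3 : (p : ℤ) ^ 2 ∣ Algebra.norm ℤ x := (pow_dvd_pow_of_dvd h2 2).trans h1
  have h4 : Algebra.norm ℤ x ≠ 0 := Algebra.norm_ne_zero_iff.mpr hx
  exact Int.le_of_dvd (abs_pos.mpr h4) ((dvd_abs _ _).mpr h3)

lemma kf_norm_ub {K : Type*} [Field K] [NumberField K] :
    ∃ (ι : Type) (_ : Fintype ι) (_ : DecidableEq ι) (b : Module.Basis ι ℤ (𝓞 K)) (C : ℕ),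
      1 ≤ Fintype.card ι ∧ 1 ≤ C ∧ ∀ (x : 𝓞 K) (y : ℕ), (∀ i, |b.repr x i| ≤ y) →
        |Algebra.norm ℤ x| ≤ ((C * y ^ Fintype.card ι : ℕ) : ℤ) := by
  let b' := NumberField.RingOfIntegers.basis K
  let b := b'.reindex (Fintype.equivFin _)
  refine ⟨_, inferInstance, inferInstance, b,
    (ClassGroup.normBound AbsoluteValue.abs b).toNat, ?_, ?_, ?_⟩
  · have := b.index_nonempty
    exact Fintype.card_pos
  · have := ClassGroup.normBound_pos AbsoluteValue.abs b
    omega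
  · intro x y h
    have h0 := ClassGroup.normBound_pos AbsoluteValue.abs b
    have := ClassGroup.norm_le AbsoluteValue.abs b x (y := (y : ℤ)) h
    push_cast
    rw [Int.toNat_of_nonneg h0.le]
    exact this

lemma kf_sieve_num (n d C N' H : ℕ) (hn : 1 ≤ n) (hC : 1 ≤ C) :
    ∃ T : ℕ, 1 ≤ T ∧ ∀ Z, 2 * d * 2 ^ n * C + 1 ≤ Z → ∀ Q, Q ^ 2 ≤ C * (H + N' * T) ^ n →
      ∑ p ∈ Finset.Ioc Z Q, (d : ℝ) * (2 ^ n * (C * T ^ n * ((p : ℝ) ^ 2)⁻¹ + 1)) < (T : ℝ) ^ n := by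
  refine ⟨(2 * d * 2 ^ n) ^ 2 * (C * (H + N') ^ n) + 1, by omega, ?_⟩
  set T := (2 * d * 2 ^ n) ^ 2 * (C * (H + N') ^ n) + 1 with hT
  intro Z hZ Q hQ
  have hTpos : (0 : ℝ) < (T : ℝ) ^ n := by positivity
  have hT1 : T ≤ T ^ n := Nat.le_self_pow (by omega) _
  have hQ2 : 2 * d * 2 ^ n * Q ≤ T ^ n := by
    rw [← Nat.pow_le_pow_iff_left (n := 2) two_ne_zero]
    calc (2 * d * 2 ^ n * Q) ^ 2 = (2 * d * 2 ^ n) ^ 2 * Q ^ 2 := by ring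
      _ ≤ (2 * d * 2 ^ n) ^ 2 * (C * (H + N' * T) ^ n) := by gcongr
      _ ≤ (2 * d * 2 ^ n) ^ 2 * (C * ((H + N') * T) ^ n) := by
        gcongr
        nlinarith [Nat.zero_le H, (by omega : 1 ≤ T)]
      _ = ((2 * d * 2 ^ n) ^ 2 * (C * (H + N') ^ n)) * T ^ n := by rw [mul_pow (H + N')]; ring
      _ ≤ T ^ n * T ^ n := by
        gcongr
        omega
      _ = (T ^ n) ^ 2 := by ring
  rcases lt_or_ge Q Z with hQZ | hQZ
  · rw [Finset.Ioc_eq_empty (by omega)]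
    simpa using hTpos
  have hZ0 : Z ≠ 0 := by omega
  have hsum := @sum_Ioc_inv_sq_le_sub ℝ _ _ _ Z Q hZ0 hQZ
  have hsum2 : ∑ p ∈ Finset.Ioc Z Q, ((p : ℝ) ^ 2)⁻¹ ≤ (Z : ℝ)⁻¹ := by
    have : (0 : ℝ) ≤ (Q : ℝ)⁻¹ := by positivity
    linarith
  have hsplit : ∑ p ∈ Finset.Ioc Z Q, (d : ℝ) * (2 ^ n * (C * T ^ n * ((p : ℝ) ^ 2)⁻¹ + 1))
      = d * 2 ^ n * C * T ^ n * ∑ p ∈ Finset.Ioc Z Q, ((p : ℝ) ^ 2)⁻¹ + d * 2 ^ n * (Q - Z : ℕ) := by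
    rw [Finset.mul_sum]
    have : (d * 2 ^ n * (Q - Z : ℕ) : ℝ) = ∑ p ∈ Finset.Ioc Z Q, (d * 2 ^ n : ℝ) := by
      simp; ring
    rw [this, ← Finset.sum_add_distrib]
    apply Finset.sum_congr rfl
    intros; ring
  rw [hsplit]
  have hZr : (2 * d * 2 ^ n * C + 1 : ℝ) ≤ Z := by exact_mod_cast hZ
  have hZpos : (0 : ℝ) < Z := by positivity
  have A1 : (d * 2 ^ n * C * T ^ n * ∑ p ∈ Finset.Ioc Z Q, ((p : ℝ) ^ 2)⁻¹ : ℝ) < T ^ n / 2 := by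
    calc _ ≤ (d * 2 ^ n * C * T ^ n * (Z : ℝ)⁻¹ : ℝ) := by gcongr
      _ = (d * 2 ^ n * C * T ^ n) / Z := by rw [div_eq_mul_inv]
      _ < T ^ n / 2 := by
        rw [div_lt_div_iff₀ hZpos (by norm_num)]
        nlinarith
  have A2 : (d * 2 ^ n * (Q - Z : ℕ) : ℝ) ≤ T ^ n / 2 := by
    have h1 : ((Q - Z : ℕ) : ℝ) ≤ Q := by exact_mod_cast Nat.sub_le _ _
    have h2 : (2 * d * 2 ^ n * Q : ℝ) ≤ T ^ n := by exact_mod_cast hQ2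
    have h3 : (d * 2 ^ n * (Q - Z : ℕ) : ℝ) ≤ d * 2 ^ n * Q := by gcongr
    linarith
  linarith

lemma kf_sieve_s2 {K : Type*} [Field K] [NumberField K] (p0 : ℕ) (hp0 : p0.Prime) (M : ℕ)
    (hM : 2 ≤ M) (x0 : 𝓞 K)
    (h0 : ∀ P : Ideal (𝓞 K), P.IsPrime → (p0 : 𝓞 K) ∈ P → x0 ∉ P ^ 2) :
    ∃ w : 𝓞 K, x0 + (p0 : 𝓞 K) ^ M * w ∈ kfreeSet K 2 := by
  classical
  obtain ⟨ι, _, _, b, C, hn, hC, hub⟩ := kf_norm_ub (K := K)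
  set n := Fintype.card ι with hndef
  set d := Module.finrank ℚ K
  set Z := 2 * d * 2 ^ n * C + 1 with hZ
  set R := ∏ q ∈ (Finset.range (Z + 1)).filter (fun q => q.Prime ∧ q ≠ p0), q with hR
  have hRp : IsCoprime ((p0 : ℤ) ^ M) (R : ℤ) := by
    apply IsCoprime.pow_left
    rw [Nat.isCoprime_iff_coprime, hR]
    apply Nat.Coprime.prod_right
    intro q hq
    rw [Finset.mem_filter] at hq
    exact (Nat.coprime_primes hp0 hq.2.1).mpr (Ne.symm hq.2.2)
  obtain ⟨u, v, huv⟩ := hRp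
  -- `x1 ≡ x0 mod p0^M`, `x1 ≡ 1 mod R`
  set x1 : 𝓞 K := x0 + (p0 : 𝓞 K) ^ M * (u * (1 - x0)) with hx1
  have huv' : (u : 𝓞 K) * (p0 : 𝓞 K) ^ M + v * (R : 𝓞 K) = 1 := by
    have := congrArg (fun z : ℤ => (z : 𝓞 K)) huv
    push_cast at this
    exact this
  have hx1' : x1 = 1 + (R : 𝓞 K) * (v * (x0 - 1)) := by
    rw [hx1]
    linear_combination (1 - x0) * huv'
  set N' := p0 ^ M * R with hN'
  let e : (ι → ℕ) → 𝓞 K := fun t => ∑ i, (t i : ℤ) • b i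
  have he : ∀ t i, b.repr (e t) i = t i := by
    intro t i
    have := b.repr_sum_self (fun i => (t i : ℤ))
    exact congrFun this i
  let X : (ι → ℕ) → 𝓞 K := fun t => x1 + (N' : 𝓞 K) * e t
  suffices hex : ∃ t, X t ∈ kfreeSet K 2 by
    obtain ⟨t, ht⟩ := hex
    refine ⟨u * (1 - x0) + R * e t, ?_⟩
    convert ht using 1
    simp only [X, hx1, hN']
    push_cast
    ring
  -- away from bad primes
  have hX0 : ∀ t, ∀ P : Ideal (𝓞 K), P.IsPrime → (p0 : 𝓞 K) ∈ P → X t ∉ P ^ 2 := by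
    intro t P hP hpP hX
    apply h0 P hP hpP
    have h1 : (p0 : 𝓞 K) ^ M ∈ P ^ 2 := Ideal.pow_le_pow_right hM (Ideal.pow_mem_pow hpP M)
    have h2 : x0 = X t - (u * (1 - x0) + R * e t) * (p0 : 𝓞 K) ^ M := by
      simp only [X, hx1, hN']
      push_cast
      ring
    rw [h2]
    exact (P ^ 2).sub_mem hX ((P ^ 2).mul_mem_left _ h1)
  have hXne : ∀ t, X t ≠ 0 := by
    intro t h
    have hnu : ¬ IsUnit (p0 : 𝓞 K) := by
      intro hu
      have h1 := hu.map (Algebra.norm ℤ)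
      have h2 : Algebra.norm ℤ (p0 : 𝓞 K) = (p0 : ℤ) ^ Module.finrank ℤ (𝓞 K) := by
        rw [Module.finrank_eq_card_basis b]
        simpa using Algebra.norm_algebraMap_of_basis b (p0 : ℤ)
      rw [h2] at h1
      have h3 : Module.finrank ℤ (𝓞 K) ≠ 0 := by
        rw [Module.finrank_eq_card_basis b]; omega
      rw [isUnit_pow_iff h3, Int.isUnit_iff_natAbs_eq] at h1
      simp at h1
      exact hp0.ne_one h1
    obtain ⟨P, hPm, hP⟩ := exists_max_ideal_of_mem_nonunits hnu
    exact hX0 t P hPm.isPrime hP (by rw [h]; exact Ideal.zero_mem _)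
  have hXR : ∀ t, ∀ q : ℕ, q.Prime → q ≤ Z → q ≠ p0 → ∀ P : Ideal (𝓞 K), P.IsPrime →
      (q : 𝓞 K) ∈ P → X t ∉ P ^ 2 := by
    intro t q hq hqZ hqp P hP hqP hX
    have hX' : X t ∈ P := Ideal.pow_le_self two_ne_zero hX
    have hqR : q ∣ R := Finset.dvd_prod_of_mem _ (by simp [hq, hqp]; omega)
    have hRP : (R : 𝓞 K) ∈ P := by
      obtain ⟨c, hc⟩ := hqR
      rw [hc]; push_cast
      exact P.mul_mem_right _ hqP
    apply hP.ne_top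
    rw [Ideal.eq_top_iff_one]
    have : (1 : 𝓞 K) = X t - (v * (x0 - 1) + p0 ^ M * e t) * R := by
      simp only [X, hx1', hN']
      push_cast
      ring
    rw [this]
    exact P.sub_mem hX' (P.mul_mem_left _ hRP)
  -- coordinates bound
  obtain ⟨H, hH⟩ : ∃ H : ℕ, ∀ i, |b.repr x1 i| ≤ H := by
    refine ⟨∑ i, (b.repr x1 i).natAbs, fun i => ?_⟩
    rw [Int.abs_eq_natAbs]
    exact_mod_cast Finset.single_le_sum (f := fun i => (b.repr x1 i).natAbs)
      (fun _ _ => Nat.zero_le _) (Finset.mem_univ i)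
  obtain ⟨T, hT1, hT⟩ := kf_sieve_num n d C N' H hn hC
  set Q := Nat.sqrt (C * (H + N' * T) ^ n) with hQ
  have hQs : Q ^ 2 ≤ C * (H + N' * T) ^ n := Nat.sqrt_le' _
  have hfin := hT Z le_rfl Q hQs
  by_contra hcon
  push Not at hcon
  set box := Fintype.piFinset (fun _ : ι => Finset.range T) with hbox
  have hboxc : box.card = T ^ n := by simp [hbox, hndef]
  have hpr : ∀ p : ℕ, ∃ s : Finset (Ideal (𝓞 K)), p.Prime → (s.card ≤ d ∧
      ∀ P : Ideal (𝓞 K), P.IsPrime → (p : 𝓞 K) ∈ P → P ∈ s) := by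
    intro p
    by_cases hp : p.Prime
    · obtain ⟨s, hs⟩ := kf_primes (K := K) p hp
      exact ⟨s, fun _ => hs⟩
    · exact ⟨∅, fun h => absurd h hp⟩
  choose s hs using hpr
  let S : ℕ → Ideal (𝓞 K) → Finset (ι → ℕ) := fun p P =>
    box.filter (fun t => P.IsPrime ∧ (p : 𝓞 K) ∈ P ∧ X t ∈ P ^ 2)
  let G := (Finset.Ioc Z Q).filter (fun p => p.Prime ∧ p ≠ p0)
  have hcover : box ⊆ G.biUnion (fun p => (s p).biUnion (S p)) := by
    intro t ht
    have h1 := hcon t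
    simp only [kfreeSet, Set.mem_ofPred_eq] at h1
    push Not at h1
    obtain ⟨P, hP, hPb, hXP⟩ := h1
    obtain ⟨p, hp, hpP⟩ := kf_below P hP hPb
    have hpp0 : p ≠ p0 := by
      rintro rfl
      exact hX0 t P hP hpP hXP
    have hpZ : Z < p := by
      by_contra h
      exact hXR t p hp (by omega) hpp0 P hP hpP hXP
    have hpQ : p ≤ Q := by
      rw [hQ, Nat.le_sqrt']
      have h2 := kf_norm_lb P hP p hp hpP (X t) (hXne t) hXP
      have h3 := hub (X t) (H + N' * T) (by
        intro i
        have h4 : b.repr (X t) i = b.repr x1 i + (N' : ℤ) * t i := by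
          have : X t = x1 + (N' : ℤ) • e t := by simp [X]
          rw [this, map_add, map_smul, Finsupp.add_apply, Finsupp.smul_apply, he, smul_eq_mul]
        rw [h4]
        refine (abs_add_le _ _).trans ?_
        push_cast
        apply add_le_add (hH i)
        rw [abs_of_nonneg (by positivity)]
        have : t i < T := by
          have := Fintype.mem_piFinset.mp ht i
          simpa using this
        gcongr)
      exact_mod_cast h2.trans h3
    simp only [Finset.mem_biUnion]
    exact ⟨p, by simp [G, hp, hpp0, hpZ, hpQ], P, (hs p hp).2 P hP hpP, by simp [S, ht, hP, hpP, hXP]⟩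
  have hcount : ∀ p ∈ G, ∀ P, ((S p P).card : ℝ) ≤ 2 ^ n * (C * T ^ n * ((p : ℝ) ^ 2)⁻¹ + 1) := by
    intro p hpG P
    obtain ⟨hpI, hp, hpp0⟩ := Finset.mem_filter.mp hpG
    have hpZ := (Finset.mem_Ioc.mp hpI).1
    obtain ⟨m, hm1, hm2, hm3⟩ := kf_choose_m n C p hn hC hp.one_lt.le
    refine le_trans ?_ (kf_arith n C T m p hp.one_lt.le hm1 hm2)
    rw [Nat.cast_le]
    apply kf_count T m hm1
    · intro t ht i
      have := Fintype.mem_piFinset.mp (Finset.mem_filter.mp ht).1 i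
      simpa using this
    · intro t ht t' ht' hd
      obtain ⟨-, hP, hpP, hX⟩ := Finset.mem_filter.mp ht
      obtain ⟨-, -, -, hX'⟩ := Finset.mem_filter.mp ht'
      have hcop : IsCoprime (N' : ℤ) ((p : ℤ) ^ 2) := by
        apply IsCoprime.pow_right
        rw [Nat.isCoprime_iff_coprime, hN']
        apply Nat.Coprime.mul_left
        · exact Nat.Coprime.pow_left _ ((Nat.coprime_primes hp0 hp).mpr (Ne.symm hpp0))
        · rw [hR]
          apply Nat.Coprime.prod_left
          intro q hq
          rw [Finset.mem_filter, Finset.mem_range] at hq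
          exact (Nat.coprime_primes hq.2.1 hp).mpr (by omega)
      have hdiff : e t - e t' ∈ P ^ 2 := by
        apply kf_coprime_mem (P ^ 2) (N' : ℤ) ((p : ℤ) ^ 2) _ _ hcop
        · have := (P ^ 2).sub_mem hX hX'
          convert this using 1
          simp only [X]
          push_cast
          ring
        · push_cast
          exact Ideal.pow_mem_pow hpP 2
      by_contra hne
      have hne' : e t - e t' ≠ 0 := by
        intro h
        apply hne
        funext i
        have := he t i
        rw [sub_eq_zero.mp h, he] at this
        exact_mod_cast this.symm
      have h2 := kf_norm_lb P hP p hp hpP _ hne' hdiff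
      have h3 := hub (e t - e t') (m - 1) (by
        intro i
        rw [map_sub, Finsupp.sub_apply, he, he]
        exact hd i)
      have h4 : (p : ℤ) ^ 2 ≤ ((C * (m - 1) ^ n : ℕ) : ℤ) := h2.trans h3
      have h5 : p ^ 2 ≤ C * (m - 1) ^ n := by exact_mod_cast h4
      omega
  have htot : ((T : ℝ) ^ n) ≤
      ∑ p ∈ Finset.Ioc Z Q, (d : ℝ) * (2 ^ n * (C * T ^ n * ((p : ℝ) ^ 2)⁻¹ + 1)) := by
    have c1 := (Finset.card_le_card hcover).trans Finset.card_biUnion_le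
    rw [hboxc] at c1
    calc ((T : ℝ) ^ n) ≤ ∑ p ∈ G, (((s p).biUnion (S p)).card : ℝ) := by exact_mod_cast c1
      _ ≤ ∑ p ∈ G, (d : ℝ) * (2 ^ n * (C * T ^ n * ((p : ℝ) ^ 2)⁻¹ + 1)) := by
        apply Finset.sum_le_sum
        intro p hpG
        have hp := (Finset.mem_filter.mp hpG).2.1
        calc (((s p).biUnion (S p)).card : ℝ) ≤ ∑ P ∈ s p, ((S p P).card : ℝ) := by
              exact_mod_cast Finset.card_biUnion_le
          _ ≤ ∑ P ∈ s p, (2 ^ n * (C * T ^ n * ((p : ℝ) ^ 2)⁻¹ + 1) : ℝ) :=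
              Finset.sum_le_sum (fun P _ => hcount p hpG P)
          _ = (s p).card * (2 ^ n * (C * T ^ n * ((p : ℝ) ^ 2)⁻¹ + 1) : ℝ) := by
              rw [Finset.sum_const, nsmul_eq_mul]
          _ ≤ _ := by
              gcongr
              exact (hs p hp).1
      _ ≤ _ := by
        apply Finset.sum_le_sum_of_subset_of_nonneg (Finset.filter_subset _ _)
        intros
        positivity
  linarith

open scoped Pointwise in
lemma kf_cover {K : Type*} [Field K] [NumberField K] (p : ℕ) (hp : p.Prime)
    (hpd : Module.finrank ℚ K < p) (Λ : AddSubgroup (𝓞 K)) (M : ℕ) (hM : 2 ≤ M)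
    (hΛ : ∀ w : 𝓞 K, (p : 𝓞 K) ^ M * w ∈ Λ) (hfree : ∀ x ∈ Λ, x ∉ kfreeSet K 2) :
    ∃ P : Ideal (𝓞 K), P.IsPrime ∧ (p : 𝓞 K) ∈ P ∧ ∀ x ∈ Λ, x ∈ P ^ 2 := by
  classical
  obtain ⟨s0, hs0, hs1⟩ := kf_primes (K := K) p hp
  let s := s0.filter (fun P => P.IsPrime ∧ (p : 𝓞 K) ∈ P)
  have hs : s.card ≤ Module.finrank ℚ K := (Finset.card_filter_le _ _).trans hs0
  let H : Ideal (𝓞 K) → AddSubgroup Λ := fun P => (P ^ 2).toAddSubgroup.addSubgroupOf Λ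
  have hcov : ⋃ i ∈ s, (0 : Λ) +ᵥ (H i : Set Λ) = Set.univ := by
    simp only [zero_vadd]
    rw [Set.eq_univ_iff_forall]
    rintro ⟨x, hx⟩
    by_contra hcon
    simp only [Set.mem_iUnion, not_exists] at hcon
    obtain ⟨w, hw⟩ := kf_sieve_s2 p hp M hM x (by
      intro P hP hpP hxP
      exact hcon P (by simp [s, hP, hpP, hs1 P hP hpP]) hxP)
    exact hfree _ (Λ.add_mem hx (hΛ w)) hw
  obtain ⟨P, hPs, hfin, hidx⟩ := AddSubgroup.exists_index_le_card_of_leftCoset_cover hcov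
  obtain ⟨-, hP, hpP⟩ := Finset.mem_filter.mp hPs
  refine ⟨P, hP, hpP, fun x hx => ?_⟩
  have h1 : (H P).index • (⟨x, hx⟩ : Λ) ∈ H P := (H P).nsmul_index_mem _
  have h2 : (((H P).index : ℤ) : 𝓞 K) * x ∈ P ^ 2 := by
    have h3 : (H P).index • x ∈ P ^ 2 := h1
    simpa using h3
  refine kf_coprime_mem (P ^ 2) _ ((p : ℤ) ^ 2) x ?_ ?_ h2
  · push_cast
    exact Ideal.pow_mem_pow hpP 2
  · apply IsCoprime.pow_right
    rw [Nat.isCoprime_iff_coprime, Nat.coprime_comm]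
    exact Nat.coprime_of_lt_prime hfin.index_ne_zero (by omega) hp

lemma kf_nonunit_s2 {L : Type*} [Field L] [NumberField L] (y : 𝓞 L) (hy : y ≠ 0) :
    ∃ t : ℕ, ¬ IsUnit (1 - (t : 𝓞 L) * y) ∧ 1 - (t : 𝓞 L) * y ≠ 0 := by
  have hev : ∀ σ : L →ₐ[ℚ] ℂ, ∀ᶠ t : ℕ in Filter.atTop, 1 < ‖σ ((1 - (t : 𝓞 L) * y : 𝓞 L) : L)‖ := by
    intro σ
    have hpos : 0 < ‖σ (y : L)‖ := by
      rw [norm_pos_iff, map_ne_zero]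
      exact RingOfIntegers.coe_ne_zero_iff.mpr hy
    have h1 : Filter.Tendsto (fun t : ℕ => (t : ℝ) * ‖σ (y : L)‖) Filter.atTop Filter.atTop :=
      tendsto_natCast_atTop_atTop.atTop_mul_const hpos
    filter_upwards [h1.eventually_gt_atTop 2] with t ht
    have h2 : σ ((1 - (t : 𝓞 L) * y : 𝓞 L) : L) = 1 - (t : ℂ) * σ (y : L) := by
      simp
    rw [h2]
    have h3 := norm_sub_norm_le ((t : ℂ) * σ (y : L)) 1
    rw [norm_sub_rev, norm_mul, norm_one] at h3
    simp only [Complex.norm_natCast] at h3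
    linarith
  obtain ⟨t, ht⟩ := (Filter.eventually_all.mpr hev).exists
  have hne : Nonempty (L →ₐ[ℚ] ℂ) := ⟨IsAlgClosed.lift⟩
  obtain ⟨σ0⟩ := hne
  refine ⟨t, ?_, ?_⟩
  · intro hu
    rw [NumberField.isUnit_iff_norm, RingOfIntegers.coe_norm] at hu
    have h1 := Algebra.norm_eq_prod_embeddings ℚ ℂ ((1 - (t : 𝓞 L) * y : 𝓞 L) : L)
    have h2 : ‖algebraMap ℚ ℂ (Algebra.norm ℚ ((1 - (t : 𝓞 L) * y : 𝓞 L) : L))‖ = 1 := by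
      rw [eq_ratCast, Complex.norm_ratCast]
      exact_mod_cast hu
    rw [h1, norm_prod] at h2
    have h3 : 1 < ∏ σ : L →ₐ[ℚ] ℂ, ‖σ ((1 - (t : 𝓞 L) * y : 𝓞 L) : L)‖ := by
      have := Finset.prod_lt_prod_of_nonempty (s := (Finset.univ : Finset (L →ₐ[ℚ] ℂ)))
        (f := fun _ => (1 : ℝ)) (g := fun σ => ‖σ ((1 - (t : 𝓞 L) * y : 𝓞 L) : L)‖)
        (fun _ _ => one_pos) (fun σ _ => ht σ) ⟨σ0, Finset.mem_univ _⟩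
      simpa using this
    linarith
  · intro h0
    have := ht σ0
    rw [h0] at this
    norm_num at this

lemma kf_dvd_nat {L : Type*} [Field L] [NumberField L] (x : 𝓞 L) (hx : x ≠ 0) :
    ∃ c : ℕ, c ≠ 0 ∧ x ∣ (c : 𝓞 L) := by
  refine ⟨Ideal.absNorm (Ideal.span {x}), ?_, ?_⟩
  · rw [Ideal.absNorm_ne_zero_iff_mem_nonZeroDivisors]
    simpa using hx
  · rw [← Ideal.mem_span_singleton]
    exact Ideal.absNorm_mem _

lemma kf_lin0 {L : Type*} [Field L] [NumberField L] (θ : 𝓞 L) (hθ : θ ≠ 0) (B : ℕ) :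
    ∃ p : ℕ, p.Prime ∧ B < p ∧ ∃ q : Ideal (𝓞 L), q.IsPrime ∧ (p : 𝓞 L) ∈ q ∧
      ∃ n : ℤ, θ - n ∈ q := by
  obtain ⟨c, hc, c', hcc⟩ := kf_dvd_nat θ hθ
  have hc' : c' ≠ 0 := by
    rintro rfl
    rw [mul_zero] at hcc
    exact hc (by exact_mod_cast hcc)
  have hfac : ((B.factorial : ℕ) : 𝓞 L) ≠ 0 := by exact_mod_cast B.factorial_ne_zero
  obtain ⟨t, ht, ht0⟩ := kf_nonunit_s2 (c' * (B.factorial : 𝓞 L)) (mul_ne_zero hc' hfac)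
  obtain ⟨q, hqm, hq⟩ := exists_max_ideal_of_mem_nonunits ht
  have hqb : q ≠ ⊥ := by
    rintro rfl
    exact ht0 (by simpa using hq)
  obtain ⟨p, hp, hpq⟩ := kf_below q hqm.isPrime hqb
  refine ⟨p, hp, ?_, q, hqm.isPrime, hpq, (c * B.factorial * t : ℕ), ?_⟩
  · by_contra hB
    have hd : p ∣ B.factorial := (hp.dvd_factorial).mpr (by omega)
    obtain ⟨e, he⟩ := hd
    apply hqm.ne_top
    rw [Ideal.eq_top_iff_one]
    have : (1 : 𝓞 L) = (1 - (t : 𝓞 L) * (c' * (B.factorial : 𝓞 L))) + (t * c' * e) * p := by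
      rw [he]; push_cast; ring
    rw [this]
    exact q.add_mem hq (q.mul_mem_left _ hpq)
  · have : θ - (((c * B.factorial * t : ℕ) : ℤ) : 𝓞 L)
        = θ * (1 - (t : 𝓞 L) * (c' * (B.factorial : 𝓞 L))) := by
      push_cast
      rw [hcc]
      ring
    rw [this]
    exact q.mul_mem_left _ hq

lemma kf_lin {L : Type*} [Field L] [NumberField L] (θ : 𝓞 L) (B : ℕ) :
    ∃ p : ℕ, p.Prime ∧ B < p ∧ ∃ q : Ideal (𝓞 L), q.IsPrime ∧ (p : 𝓞 L) ∈ q ∧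
      ∃ n : ℤ, θ - n ∈ q := by
  by_cases hθ : θ = 0
  · obtain ⟨p, hp, hB, q, hq, hpq, n, hn⟩ := kf_lin0 (1 : 𝓞 L) one_ne_zero B
    refine ⟨p, hp, hB, q, hq, hpq, n - 1, ?_⟩
    convert hn using 1
    rw [hθ]; push_cast; ring_nf
  · exact kf_lin0 θ hθ B

open Polynomial in
lemma kf_prim_s2 (L : Type*) [Field L] [NumberField L] :
    ∃ (θ : 𝓞 L) (d : ℤ) (f : ℤ[X]), d ≠ 0 ∧ aeval θ f = 0 ∧ aeval θ (derivative f) ≠ 0 ∧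
      ∀ z : 𝓞 L, ∃ h : ℤ[X], (d : 𝓞 L) * z = aeval θ h := by
  obtain ⟨α, hα⟩ := Field.exists_primitive_element ℚ L
  have halg : IsAlgebraic ℤ α :=
    (IsFractionRing.isAlgebraic_iff ℤ ℚ L).mpr (Algebra.IsAlgebraic.isAlgebraic α)
  obtain ⟨y, hy, hint⟩ := halg.exists_integral_multiple
  set θ : 𝓞 L := ⟨y • α, hint⟩ with hθ
  have hθc : (θ : L) = y • α := rfl
  have htop : IntermediateField.adjoin ℚ {(θ : L)} = ⊤ := by
    rw [eq_top_iff, ← hα, IntermediateField.adjoin_simple_le_iff]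
    have h1 : (θ : L) ∈ IntermediateField.adjoin ℚ {(θ : L)} :=
      IntermediateField.mem_adjoin_simple_self ℚ _
    have h2 : α = ((y : ℚ)⁻¹) • (θ : L) := by
      rw [hθc, ← Int.cast_smul_eq_zsmul ℚ, smul_smul, inv_mul_cancel₀ (by exact_mod_cast hy),
        one_smul]
    rw [h2]
    exact IntermediateField.smul_mem _ h1
  have hintQ : IsIntegral ℚ (θ : L) := Algebra.IsIntegral.isIntegral _
  let pb : PowerBasis ℚ L := (IntermediateField.adjoin.powerBasis hintQ).map
    ((IntermediateField.equivOfEq htop).trans IntermediateField.topEquiv)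
  have hgen : pb.gen = (θ : L) := by
    simp [pb]
  have hpbint : IsIntegral ℤ pb.gen := by rw [hgen]; exact θ.2
  have hdne : Algebra.discr ℚ pb.basis ≠ 0 := Algebra.discr_not_zero_of_basis ℚ pb.basis
  refine ⟨θ, (Algebra.discr ℚ pb.basis).num, minpoly ℤ (θ : L), by simpa using hdne, ?_, ?_, ?_⟩
  · apply RingOfIntegers.coe_injective
    have := minpoly.aeval ℤ (θ : L)
    rw [← aeval_algebraMap_apply] 
    simpa using this
  · intro h0
    have h1 : aeval (θ : L) (derivative (minpoly ℤ (θ : L))) = 0 := by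
      have := congrArg (algebraMap (𝓞 L) L) h0
      rw [← aeval_algebraMap_apply] at this
      simpa using this
    have h2 : minpoly ℚ (θ : L) = (minpoly ℤ (θ : L)).map (algebraMap ℤ ℚ) :=
      minpoly.isIntegrallyClosed_eq_field_fractions' ℚ (θ.2 : IsIntegral ℤ (θ : L))
    have h3 : (minpoly ℚ (θ : L)).Separable := Algebra.IsSeparable.isSeparable ℚ _
    refine h3.aeval_derivative_ne_zero (minpoly.aeval ℚ (θ : L)) ?_
    have h4 := congrArg (fun g => aeval (θ : L) (derivative g)) h2
    simp only [derivative_map, aeval_map_algebraMap] at h4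
    exact h4.trans h1
  · intro z
    have h1 := Algebra.discr_mul_isIntegral_mem_adjoin ℚ hpbint (z.2 : IsIntegral ℤ (z : L))
    rw [hgen, Algebra.adjoin_singleton_eq_range_aeval] at h1
    obtain ⟨h, hh⟩ := h1
    refine ⟨C ((Algebra.discr ℚ pb.basis).den : ℤ) * h, ?_⟩
    apply RingOfIntegers.coe_injective
    rw [← aeval_algebraMap_apply]
    have hh' : aeval (algebraMap (𝓞 L) L θ) h
        = algebraMap ℚ L (Algebra.discr ℚ pb.basis) * algebraMap (𝓞 L) L z := by
      rw [← Algebra.smul_def]; exact hh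
    have hq : ((Algebra.discr ℚ pb.basis).num : ℚ)
        = (Algebra.discr ℚ pb.basis).den * Algebra.discr ℚ pb.basis :=
      (Rat.den_mul_eq_num _).symm
    have hq' := congrArg (algebraMap ℚ L) hq
    simp only [map_mul, map_intCast, map_natCast] at hq'
    simp only [map_mul, hh', map_intCast, hq']
    simp [mul_assoc]

open Polynomial in
lemma kf_deg1 (L : Type*) [Field L] [NumberField L] (l B : ℕ) :
    ∃ p : ℕ, p.Prime ∧ B < p ∧ ∃ q : Ideal (𝓞 L), q.IsPrime ∧ (p : 𝓞 L) ∈ q ∧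
      ∀ z : 𝓞 L, ∃ n : ℤ, z - n ∈ q ^ l := by
  obtain ⟨θ, d, f, hd, hf, hf', hz⟩ := kf_prim_s2 L
  obtain ⟨c, hc, hdvd⟩ := kf_dvd_nat _ hf'
  obtain ⟨p, hp, hB, q, hq, hpq, n, hn⟩ := kf_lin θ (B + d.natAbs + c)
  have hpz := Nat.prime_iff_prime_int.mp hp
  have hfq : aeval θ (derivative f) ∉ q := by
    intro h
    obtain ⟨e, he⟩ := hdvd
    have h1 : (((c : ℕ) : ℤ) : 𝓞 L) ∈ q := by
      push_cast
      rw [he]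
      exact q.mul_mem_right _ h
    have h2 := kf_int_mem q hq p hp hpq _ h1
    have h3 : p ∣ c := by exact_mod_cast h2
    have := Nat.le_of_dvd (Nat.pos_of_ne_zero hc) h3
    omega
  have hcast : ∀ (g : ℤ[X]) (m : ℤ), ((g.eval m : ℤ) : 𝓞 L) = aeval (m : 𝓞 L) g := by
    intro g m
    have := aeval_algebraMap_apply (𝓞 L) m g
    simpa using this.symm
  have hcong : ∀ (g : ℤ[X]) (m : ℤ) (I : Ideal (𝓞 L)), θ - m ∈ I →
      aeval θ g - ((g.eval m : ℤ) : 𝓞 L) ∈ I := by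
    intro g m I hI
    rw [hcast, ← eval_map_algebraMap, ← eval_map_algebraMap]
    exact I.mem_of_dvd (sub_dvd_eval_sub _ _ _) hI
  have hensel : ∀ j : ℕ, ∃ m : ℤ, θ - m ∈ q ∧ (p : ℤ) ^ (j + 1) ∣ f.eval m := by
    intro j
    induction j with
    | zero =>
      refine ⟨n, hn, ?_⟩
      rw [zero_add, pow_one]
      apply kf_int_mem q hq p hp hpq
      have := hcong f n q hn
      rw [hf, zero_sub] at this
      exact (q.neg_mem_iff).mp this
    | succ j ih =>
      obtain ⟨m, hm, e, he⟩ := ih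
      have hnd : ¬ (p : ℤ) ∣ (derivative f).eval m := by
        rintro ⟨r, hr⟩
        have h1 := hcong (derivative f) m q hm
        rw [hr] at h1
        apply hfq
        have h2 : (((p : ℤ) * r : ℤ) : 𝓞 L) ∈ q := by
          push_cast
          exact q.mul_mem_right _ hpq
        simpa using q.add_mem h1 h2
      obtain ⟨a, b, hab⟩ := (hpz.coprime_iff_not_dvd.mpr hnd)
      -- a * p + b * f'(m) = 1
      refine ⟨m + (p : ℤ) ^ (j + 1) * (- e * b), ?_, ?_⟩
      · have h1 : θ - ((m + (p : ℤ) ^ (j + 1) * (- e * b) : ℤ) : 𝓞 L)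
            = (θ - m) + (p ^ j * e * b) * p := by push_cast; ring
        rw [h1]
        exact q.add_mem hm (q.mul_mem_left _ hpq)
      · obtain ⟨k, hk⟩ := binomExpansion f m ((p : ℤ) ^ (j + 1) * (- e * b))
        rw [hk, he]
        refine ⟨e * a + k * p ^ j * (e * b) ^ 2, ?_⟩
        linear_combination (- (p : ℤ) ^ (j + 1) * e) * hab
  refine ⟨p, hp, by omega, q, hq, hpq, fun z => ?_⟩
  obtain ⟨m, hm, hdv⟩ := hensel l
  have hml : θ - m ∈ q ^ l := by
    obtain ⟨k, hk⟩ := binomExpansion (f.map (algebraMap ℤ (𝓞 L))) θ ((m : 𝓞 L) - θ)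
    rw [add_sub_cancel, derivative_map, eval_map_algebraMap, eval_map_algebraMap,
      eval_map_algebraMap, hf, ← hcast] at hk
    have h1 : ((f.eval m : ℤ) : 𝓞 L) ∈ q ^ l := by
      obtain ⟨r, hr⟩ := hdv
      rw [hr]
      push_cast
      exact Ideal.mul_mem_right _ _ (Ideal.pow_le_pow_right (Nat.le_succ l) (Ideal.pow_mem_pow hpq _))
    have h2 : (aeval θ (derivative f) - k * (θ - m)) * (θ - m) ∈ q ^ l := by
      have : (aeval θ (derivative f) - k * (θ - m)) * (θ - m) = - ((f.eval m : ℤ) : 𝓞 L) := by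
        rw [hk]; ring
      rw [this]
      exact (q ^ l).neg_mem h1
    rcases Ideal.IsPrime.mul_mem_pow q h2 with h3 | h3
    · exfalso
      apply hfq
      have := q.add_mem h3 (q.mul_mem_left k hm)
      simpa using this
    · exact h3
  obtain ⟨h, hh⟩ := hz z
  have hcop : IsCoprime d ((p : ℤ) ^ l) := by
    apply IsCoprime.pow_right
    rw [isCoprime_comm, hpz.coprime_iff_not_dvd]
    intro hdvd
    have := Nat.le_of_dvd (Int.natAbs_pos.mpr hd) (Int.natCast_dvd.mp hdvd)
    omega
  have hcop' := hcop
  obtain ⟨a, b, hab⟩ := hcop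
  refine ⟨a * h.eval m, ?_⟩
  have hpl : (((p : ℤ) ^ l : ℤ) : 𝓞 L) ∈ q ^ l := by
    push_cast
    exact Ideal.pow_mem_pow hpq l
  have h1 := hcong h m (q ^ l) hml
  rw [← hh] at h1
  have hab' : (a : 𝓞 L) * d + b * (((p : ℤ) ^ l : ℤ) : 𝓞 L) = 1 := by
    have := congrArg (fun z : ℤ => (z : 𝓞 L)) hab
    push_cast at this ⊢
    exact this
  have h2 : z - ((a * h.eval m : ℤ) : 𝓞 L)
      = a * ((d : 𝓞 L) * z - ((h.eval m : ℤ) : 𝓞 L)) + (b * z) * (((p : ℤ) ^ l : ℤ) : 𝓞 L) := by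
    rw [Int.cast_mul]
    linear_combination (- z) * hab'
  rw [h2]
  exact (q ^ l).add_mem ((q ^ l).mul_mem_left _ h1) ((q ^ l).mul_mem_left _ hpl)

lemma kf_mul {K L : Type*} [Field K] [NumberField K]
    [Field L] [NumberField L] (l : ℕ) (hl : 1 ≤ l) (A : 𝓞 K →ₗ[ℤ] 𝓞 L)
    (hA : ∀ x ∈ kfreeSet K 2, A x ∈ kfreeSet L l) :
    A 1 ≠ 0 ∧ ∀ x y, A (x * y) * A 1 = A x * A y := by
  have hqne : ∀ (p : ℕ) (_ : p.Prime) (q : Ideal (𝓞 L)), (p : 𝓞 L) ∈ q → q ≠ ⊥ := by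
    rintro p hp q hpq rfl
    have : (p : 𝓞 L) = 0 := by simpa using hpq
    exact hp.ne_zero (by exact_mod_cast this)
  have h1 : (1 : 𝓞 K) ∈ kfreeSet K 2 := by
    intro P hP _ h
    exact hP.ne_top ((Ideal.eq_top_iff_one _).mpr (Ideal.pow_le_self two_ne_zero h))
  have hA1 : A 1 ≠ 0 := by
    intro h0
    obtain ⟨p, hp, -, q, hq, hpq, -⟩ := kf_deg1 L l 0
    have := hA 1 h1 q hq (hqne p hp q hpq)
    rw [h0] at this
    exact this (Ideal.zero_mem _)
  refine ⟨hA1, fun x y => ?_⟩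
  by_contra hne
  have hD : A (x * y) * A 1 - A x * A y ≠ 0 := sub_ne_zero.mpr hne
  obtain ⟨c, hc, e, he⟩ := kf_dvd_nat _ (mul_ne_zero hD hA1)
  obtain ⟨p, hp, hB, q, hq, hpq, hz⟩ := kf_deg1 L l (c + Module.finrank ℚ K)
  have hpz := Nat.prime_iff_prime_int.mp hp
  have hnot : (A (x * y) * A 1 - A x * A y) * A 1 ∉ q := by
    intro h
    have h2 : (((c : ℕ) : ℤ) : 𝓞 L) ∈ q := by
      push_cast
      rw [he]
      exact q.mul_mem_right _ h
    have h3 : p ∣ c := by exact_mod_cast kf_int_mem q hq p hp hpq _ h2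
    have := Nat.le_of_dvd (Nat.pos_of_ne_zero hc) h3
    omega
  have hDq : A (x * y) * A 1 - A x * A y ∉ q := fun h => hnot (q.mul_mem_right _ h)
  have hA1q : A 1 ∉ q := fun h => hnot (q.mul_mem_left _ h)
  have hql : q ^ l ≤ q := Ideal.pow_le_self (by omega)
  obtain ⟨P, hP, hpP, hΛ⟩ := kf_cover p hp (by omega)
    ((q ^ l).toAddSubgroup.comap A.toAddMonoidHom) (l + 2) (by omega)
    (by
      intro w
      change A ((p : 𝓞 K) ^ (l + 2) * w) ∈ q ^ l
      have h2 : (p : 𝓞 K) ^ (l + 2) * w = ((p : ℤ) ^ (l + 2)) • w := by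
        rw [zsmul_eq_mul]; push_cast; rfl
      rw [h2, map_smul, zsmul_eq_mul]
      push_cast
      exact Ideal.mul_mem_right _ _ (Ideal.pow_le_pow_right (by omega) (Ideal.pow_mem_pow hpq _)))
    (by
      intro w hw hfree
      exact hA w hfree q hq (hqne p hp q hpq) hw)
  obtain ⟨a, ha⟩ := hz (A 1)
  have hpa : ¬ (p : ℤ) ∣ a := by
    rintro ⟨r, hr⟩
    apply hA1q
    have h2 : ((a : ℤ) : 𝓞 L) ∈ q := by
      rw [hr]; push_cast
      exact q.mul_mem_right _ hpq
    simpa using q.add_mem (hql ha) h2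
  obtain ⟨b, b', hb⟩ : IsCoprime a ((p : ℤ) ^ l) := by
    apply IsCoprime.pow_right
    rw [isCoprime_comm, hpz.coprime_iff_not_dvd]
    exact hpa
  have hb' : (b : 𝓞 L) * a + b' * (p : 𝓞 L) ^ l = 1 := by
    have := congrArg (fun z : ℤ => (z : 𝓞 L)) hb
    push_cast at this
    exact this
  have key : ∀ w : 𝓞 K, ∃ n : ℤ, A w - n * A 1 ∈ q ∧ w - n ∈ P := by
    intro w
    obtain ⟨m, hm⟩ := hz (A w)
    have h2 : A w - ((m * b : ℤ) : 𝓞 L) * A 1 ∈ q ^ l := by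
      have h3 : A w - ((m * b : ℤ) : 𝓞 L) * A 1
          = (A w - m) + (m * b') * (p : 𝓞 L) ^ l - (m * b) * (A 1 - a) := by
        push_cast
        linear_combination (-(m : 𝓞 L)) * hb'
      rw [h3]
      exact (q ^ l).sub_mem ((q ^ l).add_mem hm ((q ^ l).mul_mem_left _ (Ideal.pow_mem_pow hpq l)))
        ((q ^ l).mul_mem_left _ ha)
    refine ⟨m * b, hql h2, ?_⟩
    apply Ideal.pow_le_self two_ne_zero
    apply hΛ
    change A (w - ((m * b : ℤ) : 𝓞 K)) ∈ q ^ l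
    have h4 : ((m * b : ℤ) : 𝓞 K) = (m * b) • (1 : 𝓞 K) := by rw [zsmul_eq_mul, mul_one]
    rw [map_sub, h4, map_smul, zsmul_eq_mul]
    exact h2
  obtain ⟨n, hn, hn'⟩ := key x
  obtain ⟨m, hm, hm'⟩ := key y
  obtain ⟨r, hr, hr'⟩ := key (x * y)
  have hrP : ((r - n * m : ℤ) : 𝓞 K) ∈ P := by
    have h2 : ((r - n * m : ℤ) : 𝓞 K) = - (x * y - r) + y * (x - n) + n * (y - m) := by
      push_cast; ring
    rw [h2]
    exact P.add_mem (P.add_mem (P.neg_mem hr') (P.mul_mem_left _ hn')) (P.mul_mem_left _ hm')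
  obtain ⟨u, hu⟩ := kf_int_mem P hP p hp hpP _ hrP
  apply hDq
  have hu' : (r : 𝓞 L) - n * m = p * u := by
    have := congrArg (fun z : ℤ => (z : 𝓞 L)) hu
    push_cast at this
    exact this
  have h2 : A (x * y) * A 1 - A x * A y = A 1 * (A (x * y) - r * A 1) + (A 1 ^ 2 * u) * p
      - A y * (A x - n * A 1) - (n * A 1) * (A y - m * A 1) := by
    linear_combination (A 1 ^ 2) * hu'
  rw [h2]
  exact q.sub_mem (q.sub_mem (q.add_mem (q.mul_mem_left _ hr) (q.mul_mem_left _ hpq))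
    (q.mul_mem_left _ hn)) (q.mul_mem_left _ hm)

/-- A ℤ-linear map `A : 𝓞 K → 𝓞 L` mapping `k`-free integers (`k ≥ 2`) to `l`-free
integers (`l ≥ 1`) is of the form `x ↦ ε·τ(x)` for a field embedding `τ : K → L` and
some `ε ∈ 𝓞 L`. -/
theorem linear_map_global_kfree {K L : Type*} [Field K] [NumberField K]
    [Field L] [NumberField L] (k l : ℕ) (hk : 2 ≤ k) (hl : 1 ≤ l)
    (A : 𝓞 K →ₗ[ℤ] 𝓞 L)
    (hA : ⇑A '' kfreeSet K k ⊆ kfreeSet L l) :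
    ∃ (τ : K →+* L) (ε : 𝓞 L),
      ∀ x : 𝓞 K, (A x : L) = (ε : L) * τ (x : K) := by
  have hA2 : ∀ x ∈ kfreeSet K 2, A x ∈ kfreeSet L l := by
    intro x hx
    apply hA
    exact ⟨x, fun P hP hb h => hx P hP hb (Ideal.pow_le_pow_right hk h), rfl⟩
  obtain ⟨h1, hmul⟩ := kf_mul l hl A hA2
  have h1' : algebraMap (𝓞 L) L (A 1) ≠ 0 := RingOfIntegers.coe_ne_zero_iff.mpr h1
  let φ : 𝓞 K →+* L :=
    { toFun := fun x => algebraMap (𝓞 L) L (A x) / algebraMap (𝓞 L) L (A 1)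
      map_one' := div_self h1'
      map_zero' := by simp
      map_add' := fun x y => by rw [map_add, map_add, add_div]
      map_mul' := fun x y => by
        have := congrArg (algebraMap (𝓞 L) L) (hmul x y)
        rw [map_mul (algebraMap (𝓞 L) L), map_mul (algebraMap (𝓞 L) L)] at this
        field_simp
        exact this }
  have hφ : Function.Injective φ := by
    rw [injective_iff_map_eq_zero]
    intro x hx
    by_contra hne
    obtain ⟨c, hc, e, he⟩ := kf_dvd_nat x hne
    have h2 := congrArg φ he
    rw [map_mul, hx, zero_mul, map_natCast] at h2
    exact hc (by exact_mod_cast h2)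
  refine ⟨IsFractionRing.lift hφ, A 1, fun x => ?_⟩
  have h2 : IsFractionRing.lift hφ (algebraMap (𝓞 K) K x) = φ x :=
    IsFractionRing.lift_algebraMap hφ x
  change algebraMap (𝓞 L) L (A x) = algebraMap (𝓞 L) L (A 1) * _
  rw [h2]
  change _ = _ * (algebraMap (𝓞 L) L (A x) / algebraMap (𝓞 L) L (A 1))
  field_simp
end
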